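/- arXiv:1909.09723 — 3 statements merged into one kernel-verified Lean document; each statement's English description precedes it below -/
import Mathlib

section
/- Let S be a semitopological semigroup and let (S,(K,‖·‖)) be a nonexpansive dynamical system, where K is a minimal weak* compact S-invariant subset of a dual Banach space X* and K is given the norm topology. Suppose μ is an S-invariant probability measure on the σ-algebra B₀(K,‖·‖) generated by the family of norm balls in K. If supp_‖·‖(μ) = {x ∈ K : μ({y ∈ K : ‖x − y‖ < ε}) > 0 for every ε > 0} is nonempty, then K is norm-compact. -/
open Set MeasureTheory

noncomputable section

universe u v

/-- A semitopological semigroup: multiplication is separately continuous. -/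
def IsSemitopologicalSemigroup (S : Type*) [Semigroup S] [TopologicalSpace S] : Prop :=
  (∀ t : S, Continuous fun s => t * s) ∧ (∀ t : S, Continuous fun s => s * t)

/-- The weak-star topology on the dual of a normed space: the topology of pointwise
convergence. -/
def wstarTop (X : Type*) [SeminormedAddCommGroup X] [NormedSpace ℝ X] :
    TopologicalSpace (StrongDual ℝ X) :=
  TopologicalSpace.induced (fun (f : StrongDual ℝ X) (x : X) => f x) Pi.topologicalSpace

/-!
Fix `x` in the norm support of `μ` and let `T` be the set of points of `K` all of whose closed balls
have at least the mass of the ball of the same radius about `x`. Since the maps are nonexpansive and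
preserve `μ`, they map `T` into itself. Distinct points of an `ε`-separated subset of `T` are
centres of disjoint balls whose masses are bounded below, so such a subset is finite and `T` is
totally bounded. Thus `closure T` is a nonempty norm-compact invariant subset of `K`. It is also
weak* compact, so it is all of `K` by minimality.
-/

open Metric
open scoped NNReal ENNReal Function

section IsSeparated

variable {α : Type*} [PseudoEMetricSpace α]

lemma exists_maximal_isSeparated (ε : ℝ≥0∞) (T : Set α) :
    ∃ N, Maximal (fun N ↦ N ⊆ T ∧ IsSeparated ε N) N :=
  zorn_subset {N | N ⊆ T ∧ IsSeparated ε N} fun c hc hchain ↦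
    ⟨⋃₀ c, ⟨sUnion_subset fun _ hN ↦ (hc hN).1,
      hchain.pairwise_sUnion.2 fun _ hN ↦ (hc hN).2⟩, fun _ ↦ subset_sUnion_of_mem⟩

lemma totallyBounded_of_finite_of_isSeparated {T : Set α}
    (hfin : ∀ ε : ℝ≥0, 0 < ε → ∀ N ⊆ T, IsSeparated ε N → N.Finite) :
    TotallyBounded T := by
  refine EMetric.totallyBounded_iff.2 fun ε hε ↦ ?_
  obtain ⟨δ, hδ, hδε⟩ := ENNReal.lt_iff_exists_nnreal_btwn.1 hε
  obtain ⟨N, hN⟩ := exists_maximal_isSeparated δ T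
  refine ⟨N, hfin δ (by exact_mod_cast hδ) N hN.prop.1 hN.prop.2, ?_⟩
  have hcover : IsCover δ T N := .of_maximal_isSeparated hN
  exact (isCover_iff_subset_iUnion_closedEBall.1 hcover).trans
    (iUnion₂_mono fun _ _ _ hx ↦ lt_of_le_of_lt hx hδε)

end IsSeparated

section BallMass

variable {α : Type*} [PseudoMetricSpace α] {_ : MeasurableSpace α} {μ : Measure α}
  {K T N : Set α} {x : α}

lemma finite_of_isSeparated_of_le_measure [IsFiniteMeasure μ] {r : ℝ≥0} {m : ℝ≥0∞}
    (hm : 0 < m) (hN : IsSeparated (2 * r) N)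
    (hmeas : ∀ y ∈ N, MeasurableSet (K ∩ closedBall y r))
    (hle : ∀ y ∈ N, m ≤ μ (K ∩ closedBall y r)) : N.Finite := by
  have hdisj : Pairwise (Disjoint on fun y : N ↦ K ∩ closedBall (y : α) r) := by
    intro y z hyz
    have hlt : (r + r : ℝ) < dist (y : α) z := by
      have hedist : 2 * (r : ℝ≥0∞) < edist (y : α) z := hN y.2 z.2 (Subtype.coe_ne_coe.2 hyz)
      rw [edist_nndist, two_mul] at hedist
      exact_mod_cast hedist
    exact (closedBall_disjoint_closedBall hlt).mono inter_subset_right inter_subset_right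
  have hfin := Measure.finite_const_le_meas_of_disjoint_iUnion μ hm
    (fun y : N ↦ hmeas y y.2) hdisj (measure_ne_top μ _)
  exact finite_coe_iff.1 (finite_univ_iff.1 (hfin.subset fun y _ ↦ hle y y.2))

lemma totallyBounded_of_le_measure_closedBall [IsFiniteMeasure μ]
    (hmeas : ∀ y ∈ T, ∀ r, MeasurableSet (K ∩ closedBall y r))
    (hle : ∀ r > 0, ∃ m > 0, ∀ y ∈ T, m ≤ μ (K ∩ closedBall y r)) : TotallyBounded T := by
  refine totallyBounded_of_finite_of_isSeparated fun ε hε N hNT hN ↦ ?_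
  obtain ⟨m, hm, hmT⟩ := hle (ε / 2 : ℝ≥0) (by positivity)
  refine finite_of_isSeparated_of_le_measure (r := ε / 2) hm ?_
    (fun y hy ↦ hmeas y (hNT hy) _) (fun y hy ↦ hmT y (hNT hy))
  rwa [← ENNReal.coe_ofNat, ← ENNReal.coe_mul, mul_div_cancel₀ ε two_ne_zero]

lemma measure_inter_closedBall_le_of_lipschitzOnWith_one {f : α → α} {y : α} {r : ℝ}
    (hf : LipschitzOnWith 1 f K) (hmaps : MapsTo f K K)
    (hμf : μ (K ∩ f ⁻¹' (K ∩ closedBall (f y) r)) ≤ μ (K ∩ closedBall (f y) r)) (hy : y ∈ K) :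
    μ (K ∩ closedBall y r) ≤ μ (K ∩ closedBall (f y) r) := by
  refine le_trans (measure_mono ?_) hμf
  intro z ⟨hzK, hz⟩
  refine ⟨hzK, hmaps hzK, ?_⟩
  calc dist (f z) (f y) ≤ dist z y := by simpa using hf.dist_le_mul z hzK y hy
    _ ≤ r := hz

/-- The points of `K` all of whose closed balls have, within `K`, at least the `μ`-mass of the
ball of the same radius about `x`. This set contains the orbit of `x` under any
`μ`-preserving nonexpansive self-maps of `K`. -/
def ballMassDominating (μ : Measure α) (K : Set α) (x : α) : Set α :=
  {y ∈ K | ∀ r, μ (K ∩ closedBall x r) ≤ μ (K ∩ closedBall y r)}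

lemma ballMassDominating_subset : ballMassDominating μ K x ⊆ K := sep_subset _ _

lemma self_mem_ballMassDominating (hx : x ∈ K) : x ∈ ballMassDominating μ K x :=
  ⟨hx, fun _ ↦ le_rfl⟩

lemma totallyBounded_ballMassDominating [IsFiniteMeasure μ]
    (hmeas : ∀ y ∈ K, ∀ r, MeasurableSet (K ∩ closedBall y r))
    (hpos : ∀ r > 0, 0 < μ (K ∩ closedBall x r)) :
    TotallyBounded (ballMassDominating μ K x) :=
  totallyBounded_of_le_measure_closedBall (fun y hy ↦ hmeas y hy.1)
    fun r hr ↦ ⟨_, hpos r hr, fun _ hy ↦ hy.2 r⟩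

lemma mapsTo_ballMassDominating {f : α → α} (hf : LipschitzOnWith 1 f K) (hmaps : MapsTo f K K)
    (hmeas : ∀ y ∈ K, ∀ r, MeasurableSet (K ∩ closedBall y r))
    (hμf : ∀ A ⊆ K, MeasurableSet A → μ (K ∩ f ⁻¹' A) = μ A) :
    MapsTo f (ballMassDominating μ K x) (ballMassDominating μ K x) :=
  fun _ ⟨hyK, hy⟩ ↦ ⟨hmaps hyK, fun r ↦ (hy r).trans <|
    measure_inter_closedBall_le_of_lipschitzOnWith_one hf hmaps
      (hμf _ inter_subset_left (hmeas _ (hmaps hyK) r)).le hyK⟩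

theorem normCompact_of_invariant_measure_norm_support_nonempty_general [CompleteSpace α]
    {ι : Type*} {f : ι → α → α} (hK : IsClosed K) (hmaps : ∀ i, MapsTo (f i) K K)
    (hf : ∀ i, LipschitzOnWith 1 (f i) K)
    (hmin : ∀ K' ⊆ K, K'.Nonempty → IsCompact K' → (∀ i, MapsTo (f i) K' K') → K' = K)
    [IsFiniteMeasure μ] (hmeas : ∀ y ∈ K, ∀ r, MeasurableSet (K ∩ closedBall y r))
    (hμf : ∀ i, ∀ A ⊆ K, MeasurableSet A → μ (K ∩ f i ⁻¹' A) = μ A)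
    (hsupp : ∃ x ∈ K, ∀ ε > 0, 0 < μ (K ∩ ball x ε)) : IsCompact K := by
  obtain ⟨x, hxK, hx⟩ := hsupp
  set T := ballMassDominating μ K x
  have hTK : closure T ⊆ K := closure_minimal ballMassDominating_subset hK
  have hTtb : TotallyBounded T := totallyBounded_ballMassDominating hmeas fun r hr ↦
    (hx r hr).trans_le (measure_mono (inter_subset_inter_right K ball_subset_closedBall))
  have hTcpt : IsCompact (closure T) := hTtb.closure.isCompact_of_isClosed isClosed_closure
  have hTinv (i : ι) : MapsTo (f i) (closure T) (closure T) :=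
    (mapsTo_ballMassDominating (hf i) (hmaps i) hmeas (hμf i)).closure_of_continuousOn
      ((hf i).continuousOn.mono hTK)
  exact hmin _ hTK ⟨x, subset_closure (self_mem_ballMassDominating hxK)⟩ hTcpt hTinv ▸ hTcpt

end BallMass

section WeakStar

variable {X : Type*} [SeminormedAddCommGroup X] [NormedSpace ℝ X] {K : Set (StrongDual ℝ X)}

-- `wstarTop X` is definitionally the topology of `WeakDual ℝ X`; the proofs below rely on this.
lemma norm_topology_le_wstarTop :
    (inferInstance : TopologicalSpace (StrongDual ℝ X)) ≤ wstarTop X :=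
  NormedSpace.Dual.dual_norm_topology_le_weak_dual_topology

lemma isCompact_wstarTop_of_isCompact (hK : IsCompact K) : @IsCompact _ (wstarTop X) K := by
  simpa only [image_id] using
    @IsCompact.image _ _ _ (wstarTop X) _ id hK (continuous_id_of_le norm_topology_le_wstarTop)

lemma isClosed_of_isCompact_wstarTop (hK : @IsCompact _ (wstarTop X) K) : IsClosed K := by
  have hKweak : IsCompact (X := WeakDual ℝ X) K := hK
  exact hKweak.isClosed.mono norm_topology_le_wstarTop

end WeakStar

lemma sep_norm_sub_le_eq_inter_closedBall {E : Type*} [SeminormedAddCommGroup E] (K : Set E)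
    (x : E) (r : ℝ) : {y ∈ K | ‖x - y‖ ≤ r} = K ∩ closedBall x r := by
  ext y
  simp [dist_eq_norm_sub']

lemma sep_norm_sub_lt_eq_inter_ball {E : Type*} [SeminormedAddCommGroup E] (K : Set E)
    (x : E) (r : ℝ) : {y ∈ K | ‖x - y‖ < r} = K ∩ ball x r := by
  ext y
  simp [dist_eq_norm_sub']

/-- **Lemma (banach)**: Let `(S,(K,‖·‖))` be a nonexpansive dynamical system, where `K` is a
minimal weak* compact `S`-invariant subset of a dual Banach space, and let `μ` be an
`S`-invariant probability measure on the σ-algebra `B₀(K,‖·‖)` generated by the norm balls of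
`K`.  If the norm support of `μ` is nonempty then `K` is norm-compact. -/
theorem normCompact_of_invariant_measure_norm_support_nonempty
    {S : Type u} [Semigroup S] [TopologicalSpace S] [T2Space S]
    (hS : IsSemitopologicalSemigroup S)
    {X : Type v} [NormedAddCommGroup X] [NormedSpace ℝ X] [CompleteSpace X]
    (K : Set (StrongDual ℝ X)) (π : S → StrongDual ℝ X → StrongDual ℝ X)
    -- `K` is a nonempty weak* compact set
    (hKne : K.Nonempty) (hKcpt : @IsCompact _ (wstarTop X) K)
    -- `(S,(K,‖·‖))` is a dynamical system (`K` carrying the norm topology)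
    (hinv : ∀ s : S, MapsTo (π s) K K)
    (hact : ∀ s t : S, ∀ x ∈ K, π (s * t) x = π s (π t x))
    (horb : ∀ x ∈ K, Continuous fun s => π s x)
    (htra : ∀ s : S, ContinuousOn (π s) K)
    -- the system is nonexpansive
    (hne : ∀ s : S, ∀ x ∈ K, ∀ y ∈ K, ‖π s x - π s y‖ ≤ ‖x - y‖)
    -- `K` is a minimal weak* compact `S`-invariant set
    (hmin : ∀ K' ⊆ K, K'.Nonempty → @IsCompact _ (wstarTop X) K' →
      (∀ s : S, MapsTo (π s) K' K') → K' = K)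
    -- `μ` is an `S`-invariant probability measure on `B₀(K,‖·‖)`
    (μ : @Measure (StrongDual ℝ X)
      (MeasurableSpace.generateFrom {A | ∃ x ∈ K, ∃ r : ℝ, A = {y ∈ K | ‖x - y‖ ≤ r}}))
    (hprob : @IsProbabilityMeasure _
      (MeasurableSpace.generateFrom {A | ∃ x ∈ K, ∃ r : ℝ, A = {y ∈ K | ‖x - y‖ ≤ r}}) μ)
    (hK1 : μ K = 1)
    (hμinv : ∀ s : S, ∀ A ⊆ K,
      @MeasurableSet _
        (MeasurableSpace.generateFrom {A | ∃ x ∈ K, ∃ r : ℝ, A = {y ∈ K | ‖x - y‖ ≤ r}}) A →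
      μ {x ∈ K | π s x ∈ A} = μ A)
    -- the norm support of `μ` is nonempty
    (hsupp : ∃ x ∈ K, ∀ ε : ℝ, 0 < ε → 0 < μ {y ∈ K | ‖x - y‖ < ε}) :
    -- then `K` is norm-compact
    IsCompact K := by
  have hlip (s : S) : LipschitzOnWith 1 (π s) K :=
    .of_dist_le_mul fun x hx y hy ↦ by simpa [dist_eq_norm] using hne s x hx y hy
  simp only [sep_norm_sub_lt_eq_inter_ball] at hsupp
  refine normCompact_of_invariant_measure_norm_support_nonempty_general
    (isClosed_of_isCompact_wstarTop hKcpt) hinv hlip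
    (fun K' hK'K hK'ne hK' ↦ hmin K' hK'K hK'ne (isCompact_wstarTop_of_isCompact hK'))
    (fun y hy r ↦ ?_) hμinv hsupp
  rw [← sep_norm_sub_le_eq_inter_closedBall]
  exact MeasurableSpace.measurableSet_generateFrom ⟨y, hy, r, rfl⟩
end
end

section
/- Let C be a bounded convex L-embedded subset of a Banach space X and let (S,(C,weak)) be a nonexpansive dynamical system whose action S × C → C is jointly continuous when C carries the weak topology. If LUC(S) has a left invariant mean and C contains a bounded subset A such that s(A) = A for all s ∈ S, then there is a point x in the Chebyshev center E_C(A) with sx = x for all s ∈ S. -/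
open Set MeasureTheory BoundedContinuousFunction

noncomputable section

universe u v

/-- The weak topology on a topological module `X` over `𝕜`: the coarsest topology making all
continuous linear functionals continuous. -/
def weakTop (𝕜 : Type*) (X : Type*) [NontriviallyNormedField 𝕜] [AddCommGroup X]
    [Module 𝕜 X] [TopologicalSpace X] : TopologicalSpace X :=
  ⨅ f : X →L[𝕜] 𝕜, TopologicalSpace.induced (⇑f) inferInstance

section CbDefs

variable (S : Type u) [Semigroup S] [TopologicalSpace S]

/-- `g` is the family of left translates of `f`: `g s = L_s f` where `L_s f (t) = f (s * t)`. -/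
def IsLTranslates (f : S →ᵇ ℂ) (g : S → S →ᵇ ℂ) : Prop :=
  ∀ s t, g s t = f (s * t)

/-- `LUC(S)`: bounded continuous `f` such that `s ↦ L_s f` is norm continuous. -/
def LUCset : Set (S →ᵇ ℂ) :=
  {f | ∃ g, IsLTranslates S f g ∧ Continuous g}

/-- `AP(S)`: bounded continuous `f` whose set of left translates is relatively compact in the
norm topology of `C(S)`. -/
def APset : Set (S →ᵇ ℂ) :=
  {f | ∃ g, IsLTranslates S f g ∧ IsCompact (closure (Set.range g))}

/-- `WAP(S)`: bounded continuous `f` whose set of left translates is relatively compact in the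
weak topology of `C(S)`. -/
def WAPset : Set (S →ᵇ ℂ) :=
  {f | ∃ g, IsLTranslates S f g ∧
    @IsCompact _ (weakTop ℂ (S →ᵇ ℂ)) (@closure _ (weakTop ℂ (S →ᵇ ℂ)) (Set.range g))}

/-- The topology on `C(S)` induced by the multiplicative means. -/
def lmcTop : TopologicalSpace (S →ᵇ ℂ) :=
  ⨅ μ : {μ : (S →ᵇ ℂ) →L[ℂ] ℂ // ‖μ‖ = 1 ∧ μ 1 = 1 ∧ ∀ f g, μ (f * g) = μ f * μ g},
    TopologicalSpace.induced (⇑μ.1) inferInstance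

/-- `LMC(S)`: bounded continuous `f` such that `s ↦ L_s f` is continuous into `C(S)` with the
topology induced by the multiplicative means. -/
def LMCset : Set (S →ᵇ ℂ) :=
  {f | ∃ g, IsLTranslates S f g ∧ @Continuous _ _ _ (lmcTop S) g}

/-- `Y ⊆ C(S)` has a left invariant mean: there is a norm-one functional `μ` on `C(S)` with
`μ 1 = 1` and `μ (L_s f) = μ f` for all `f ∈ Y` and `s ∈ S`.  (By the Hahn–Banach extension
theorem this is equivalent to the existence of a left invariant mean on the subspace `Y`.) -/
def HasLIM (Y : Set (S →ᵇ ℂ)) : Prop :=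
  ∃ μ : (S →ᵇ ℂ) →L[ℂ] ℂ, ‖μ‖ = 1 ∧ μ 1 = 1 ∧
    ∀ f ∈ Y, ∀ g : S → S →ᵇ ℂ, IsLTranslates S f g → ∀ s, μ (g s) = μ f

end CbDefs

/-- A subset `C` of a Banach space `X` is `L`-embedded if there is a closed subspace `Xs` of
`X**` with `X ⊕₁ Xs ⊆ X**` and such that the weak* closure of `C` in `X**` is contained in
`C ⊕₁ Xs`. -/
def LEmbeddedSet {X : Type v} [NormedAddCommGroup X] [NormedSpace ℝ X] (C : Set X) : Prop :=
  ∃ Xs : Submodule ℝ (StrongDual ℝ (StrongDual ℝ X)),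
    IsClosed (Xs : Set (StrongDual ℝ (StrongDual ℝ X))) ∧
    (∀ x : X, ∀ ξ ∈ Xs,
      ‖NormedSpace.inclusionInDoubleDual ℝ X x + ξ‖ =
        ‖NormedSpace.inclusionInDoubleDual ℝ X x‖ + ‖ξ‖) ∧
    (@closure _ (wstarTop (StrongDual ℝ X))
        (NormedSpace.inclusionInDoubleDual ℝ X '' C) ⊆
      {z | ∃ c ∈ C, ∃ ξ ∈ Xs, z = NormedSpace.inclusionInDoubleDual ℝ X c + ξ})

/-- The Chebyshev radius of `A` in `C`. -/
def chebyshevRadius {X : Type v} [NormedAddCommGroup X] (C A : Set X) : ℝ :=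
  ⨅ x : C, ⨆ y : A, ‖(x : X) - y‖

/-- The Chebyshev center of `A` in `C`. -/
def chebyshevCenter {X : Type v} [NormedAddCommGroup X] (C A : Set X) : Set X :=
  {x ∈ C | (⨆ y : A, ‖x - (y : X)‖) = chebyshevRadius C A}

/-!
The Chebyshev center `E` of `A` in `C` is nonempty and weakly compact: a point of the weak* closure
of `C` in the bidual has the form `c + ξ`, and if it lies within `r` of every point of `A` then
`‖c - y‖ + ‖ξ‖ ≤ r` for all `y ∈ A`, which for `r` the Chebyshev radius forces `ξ = 0`. Moreover `E`
is convex, and it is invariant because the action is nonexpansive and `A ⊆ s(A)`.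

By Zorn's lemma `E` contains a minimal nonempty weakly compact convex invariant set `T`. Functions
of the form `s ↦ f (s • t)` with `f` weakly continuous on `T` are left uniformly continuous, so the
invariant mean and the Riesz representation theorem give an invariant regular probability measure
`μ` on `T`. The mean square distance `x ↦ ∫ ‖x - y‖² dμ(y)` is convex, norm continuous and does not
increase along orbits, so it is constant on `T` by minimality. As the square is strictly convex, any
two points of `T` are then equidistant from `μ`-almost every point. Since weakly compact sets are
fragmented by the norm (Namioka), there are sets of positive measure and arbitrarily small norm
diameter, and therefore `T` is a single point.
-/

section WeakTopology

variable {𝕜 X T : Type*} [TopologicalSpace T]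

theorem weakTop_eq_weakSpace [NontriviallyNormedField 𝕜] [AddCommGroup X] [Module 𝕜 X]
    [TopologicalSpace X] :
    weakTop 𝕜 X = inferInstanceAs (TopologicalSpace (WeakSpace 𝕜 X)) := by
  refine (iInf_congr fun f => ?_).trans (induced_iInf (g := fun x (f : X →L[𝕜] 𝕜) => f x)).symm
  exact (induced_compose (f := fun x (f : X →L[𝕜] 𝕜) => f x) (g := fun h => h f)).symm

variable [NormedAddCommGroup X] [NormedSpace ℝ X] {ι : T → X}

theorem isClosed_preimage_of_convex (hι : Continuous fun t => toWeakSpace ℝ X (ι t))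
    {B : Set X} (hB : Convex ℝ B) (hBc : IsClosed B) : IsClosed (ι ⁻¹' B) := by
  have hB' : IsClosed (toWeakSpace ℝ X '' B) := by
    rw [← hBc.closure_eq, hB.toWeakSpace_closure ℝ]
    exact isClosed_closure
  simpa only [preimage_preimage, (toWeakSpace ℝ X).injective.mem_set_image, preimage, mem_ofPred_eq]
    using hB'.preimage hι

theorem measurable_norm_sub [MeasurableSpace T] [OpensMeasurableSpace T]
    (hι : Continuous fun t => toWeakSpace ℝ X (ι t)) (x : X) : Measurable fun t => ‖x - ι t‖ := by
  refine measurable_of_Iic fun c => ?_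
  have hclosed := isClosed_preimage_of_convex hι (convex_closedBall x c) Metric.isClosed_closedBall
  simpa only [preimage, Metric.mem_closedBall, dist_eq_norm', mem_Iic] using hclosed.measurableSet

theorem isSeparable_image_closure (hι : Continuous fun t => toWeakSpace ℝ X (ι t)) {D : Set T}
    (hD : D.Countable) : TopologicalSpace.IsSeparable (ι '' closure D) := by
  set Y := (Submodule.span ℝ (ι '' D)).topologicalClosure
  have hDY : D ⊆ ι ⁻¹' Y := fun t ht =>
    Submodule.le_topologicalClosure _ (Submodule.subset_span (mem_image_of_mem ι ht))
  have hclosed : IsClosed (ι ⁻¹' Y) :=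
    isClosed_preimage_of_convex hι Y.convex (Submodule.isClosed_topologicalClosure _)
  exact (hD.image ι).isSeparable.span.closure.mono
    (image_subset_iff.2 (closure_minimal hDY hclosed))

theorem isBounded_range_of_weaklyContinuous [CompactSpace T]
    (hι : Continuous fun t => toWeakSpace ℝ X (ι t)) : Bornology.IsBounded (range ι) := by
  have hcompact := isCompact_range ((NormedSpace.inclusionInDoubleDualWeak ℝ X).continuous.comp hι)
  have hbdd := WeakDual.isBounded_iff_isVonNBounded.2 (hcompact.isVonNBounded ℝ)
  obtain ⟨R, hR⟩ := isBounded_iff_forall_norm_le.1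
    (WeakDual.isBounded_toWeakDual_preimage_iff_isBounded.2 hbdd)
  refine isBounded_iff_forall_norm_le.2 ⟨R, ?_⟩
  rintro _ ⟨t, rfl⟩
  rw [← (NormedSpace.inclusionInDoubleDualLi ℝ).norm_map (ι t)]
  exact hR _ ⟨t, rfl⟩

end WeakTopology

section Fragmentability

variable {X T : Type*} [NormedAddCommGroup X] [NormedSpace ℝ X] [TopologicalSpace T] {ι : T → X}
  {ε : ℝ}

theorem countable_of_pairwise_le_dist {I Y : Type*} [PseudoMetricSpace Y] {p : I → Y} (hε : 0 < ε)
    (hsep : TopologicalSpace.IsSeparable (range p))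
    (hp : Pairwise fun i j => ε ≤ dist (p i) (p j)) : Countable I := by
  have := hsep.separableSpace
  refine Pairwise.countable_of_isOpen_disjoint
    (s := fun i => Metric.ball (rangeFactorization p i) (ε / 2)) (fun i j hij => ?_)
    (fun _ => Metric.isOpen_ball) fun i => ⟨_, Metric.mem_ball_self (half_pos hε)⟩
  exact Metric.ball_disjoint_ball ((add_halves ε).trans_le (hp hij))

theorem isOpen_setOf_lt_norm_sub (hι : Continuous fun t => toWeakSpace ℝ X (ι t)) (ε : ℝ) :
    IsOpen {q : T × T | ε < ‖ι q.1 - ι q.2‖} := by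
  have hsub : Continuous fun q : T × T => toWeakSpace ℝ X (ι q.1 - ι q.2) := by
    simp only [map_sub]
    exact (hι.comp continuous_fst).sub (hι.comp continuous_snd)
  have hclosed := isClosed_preimage_of_convex hsub (convex_closedBall 0 ε)
    Metric.isClosed_closedBall
  simpa only [← isClosed_compl_iff, compl_def, mem_ofPred_eq, not_lt, preimage,
    mem_closedBall_zero_iff] using hclosed

theorem exists_isOpen_pair_separated [RegularSpace T]
    (hι : Continuous fun t => toWeakSpace ℝ X (ι t)) {U : Set T} (hU : IsOpen U) {x y : T}
    (hx : x ∈ U) (hy : y ∈ U) (hxy : ε < ‖ι x - ι y‖) :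
    ∃ V : Bool → Set T, (∀ b, IsOpen (V b) ∧ (V b).Nonempty ∧ closure (V b) ⊆ U) ∧
      Pairwise fun b c => ∀ p ∈ V b, ∀ q ∈ V c, ε ≤ ‖ι p - ι q‖ := by
  have hfar : (U ×ˢ U) ∩ {q : T × T | ε < ‖ι q.1 - ι q.2‖} ∈ nhds (x, y) :=
    ((hU.prod hU).inter (isOpen_setOf_lt_norm_sub hι ε)).mem_nhds ⟨⟨hx, hy⟩, hxy⟩
  obtain ⟨⟨F, G⟩, ⟨⟨hF, hFc⟩, hG, hGc⟩, hFG⟩ :=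
    ((closed_nhds_basis x).prod_nhds (closed_nhds_basis y)).mem_iff.1 hfar
  have hsep : ∀ p ∈ interior F, ∀ q ∈ interior G, ε ≤ ‖ι p - ι q‖ := fun p hp q hq =>
    (hFG (mk_mem_prod (interior_subset hp) (interior_subset hq))).2.le
  have hFU : F ⊆ U := fun p hp => (hFG (mk_mem_prod hp (mem_of_mem_nhds hG))).1.1
  have hGU : G ⊆ U := fun q hq => (hFG (mk_mem_prod (mem_of_mem_nhds hF) hq)).1.2
  refine ⟨fun b => interior (cond b F G), Bool.forall_bool.2
    ⟨⟨isOpen_interior, ⟨y, mem_interior_iff_mem_nhds.2 hG⟩,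
      (closure_minimal interior_subset hGc).trans hGU⟩,
    ⟨isOpen_interior, ⟨x, mem_interior_iff_mem_nhds.2 hF⟩,
      (closure_minimal interior_subset hFc).trans hFU⟩⟩, ?_⟩
  rintro (_ | _) (_ | _) hbc
  · exact absurd rfl hbc
  · exact fun p hp q hq => norm_sub_rev (ι p) (ι q) ▸ hsep q hq p hp
  · exact hsep
  · exact absurd rfl hbc

theorem exists_separated_scheme [RegularSpace T] [Nonempty T]
    (hι : Continuous fun t => toWeakSpace ℝ X (ι t))
    (hlarge : ∀ U : Set T, IsOpen U → U.Nonempty → ∃ x ∈ U, ∃ y ∈ U, ε < ‖ι x - ι y‖) :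
    ∃ V : List Bool → Set T, (∀ l, (V l).Nonempty) ∧ CantorScheme.ClosureAntitone V ∧
      ∀ l, Pairwise fun b c => ∀ p ∈ V (b :: l), ∀ q ∈ V (c :: l), ε ≤ ‖ι p - ι q‖ := by
  have split : ∀ U : {U : Set T // IsOpen U ∧ U.Nonempty},
      ∃ V : Bool → {U : Set T // IsOpen U ∧ U.Nonempty}, (∀ b, closure (V b).1 ⊆ U.1) ∧
        Pairwise fun b c => ∀ p ∈ (V b).1, ∀ q ∈ (V c).1, ε ≤ ‖ι p - ι q‖ := by
    rintro ⟨U, hU, hUne⟩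
    obtain ⟨x, hx, y, hy, hxy⟩ := hlarge U hU hUne
    obtain ⟨V, hV, hsep⟩ := exists_isOpen_pair_separated hι hU hx hy hxy
    exact ⟨fun b => ⟨V b, (hV b).1, (hV b).2.1⟩, fun b => (hV b).2.2, hsep⟩
  choose V hclosure hsep using split
  let node : List Bool → {U : Set T // IsOpen U ∧ U.Nonempty} := fun l =>
    l.rec ⟨univ, isOpen_univ, univ_nonempty⟩ fun b _ U => V U b
  exact ⟨fun l => (node l).1, fun l => (node l).2.2, fun l b => hclosure (node l) b,
    fun l => hsep (node l)⟩

theorem exists_branch_points [CompactSpace T] {β : Type*} [Countable β] {V : List β → Set T}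
    (hne : ∀ l, (V l).Nonempty) (hV : CantorScheme.ClosureAntitone V) :
    ∃ D : Set T, D.Countable ∧ ∃ p : (ℕ → β) → T,
      ∀ σ, p σ ∈ closure D ∧ ∀ n, p σ ∈ V (PiNat.res σ n) := by
  choose x hx using hne
  have hlim : ∀ σ, (⋂ n, closure (V (PiNat.res σ n)) ∩ closure (range x)).Nonempty := fun σ =>
    IsCompact.nonempty_iInter_of_sequence_nonempty_isCompact_isClosed _
      (fun n => inter_subset_inter_left _ ((hV _ _).trans subset_closure))
      (fun n => ⟨x _, subset_closure (hx _), subset_closure (mem_range_self _)⟩)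
      (isClosed_closure.inter isClosed_closure).isCompact
      (fun n => isClosed_closure.inter isClosed_closure)
  choose p hp using hlim
  simp only [mem_iInter, mem_inter_iff] at hp
  exact ⟨range x, countable_range x, p, fun σ => ⟨(hp σ 0).2, fun n => hV _ _ (hp σ (n + 1)).1⟩⟩

/-- Namioka's fragmentability theorem. Otherwise a dyadic scheme of separated open sets yields
uncountably many `ε`-separated branch points, all in the closure of a countable set, whose image
is norm-separable by Mazur's theorem. -/
theorem exists_isOpen_norm_sub_le [CompactSpace T] [RegularSpace T] [Nonempty T]
    (hι : Continuous fun t => toWeakSpace ℝ X (ι t)) (hε : 0 < ε) :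
    ∃ U : Set T, IsOpen U ∧ U.Nonempty ∧ ∀ x ∈ U, ∀ y ∈ U, ‖ι x - ι y‖ ≤ ε := by
  by_contra! hlarge
  obtain ⟨V, hne, hV, hsep⟩ := exists_separated_scheme hι hlarge
  obtain ⟨D, hD, p, hp⟩ := exists_branch_points hne hV
  have hpsep : Pairwise fun σ τ => ε ≤ dist (ι (p σ)) (ι (p τ)) := by
    intro σ τ hστ
    have hres : PiNat.res σ (PiNat.firstDiff σ τ) = PiNat.res τ (PiNat.firstDiff σ τ) :=
      PiNat.res_eq_res.2 fun _ hm => PiNat.apply_eq_of_lt_firstDiff hm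
    have hτ := (hp τ).2 (PiNat.firstDiff σ τ + 1)
    rw [PiNat.res_succ, ← hres] at hτ
    rw [dist_eq_norm]
    exact hsep _ (PiNat.apply_firstDiff_ne hστ) _ ((hp σ).2 (PiNat.firstDiff σ τ + 1)) _ hτ
  have hpD : range (fun σ => ι (p σ)) ⊆ ι '' closure D :=
    range_subset_iff.2 fun σ => mem_image_of_mem ι (hp σ).1
  have hcount : Countable (ℕ → Bool) :=
    countable_of_pairwise_le_dist hε ((isSeparable_image_closure hι hD).mono hpD) hpsep
  refine (Cardinal.mk_le_aleph0_iff.2 hcount).not_gt ?_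
  rw [← Cardinal.power_def, Cardinal.mk_bool, Cardinal.mk_nat]
  exact Cardinal.cantor Cardinal.aleph0

theorem exists_measure_ne_zero_norm_sub_le [CompactSpace T] [T2Space T] [MeasurableSpace T]
    {μ : Measure T} [μ.Regular] (hμ : μ ≠ 0)
    (hι : Continuous fun t => toWeakSpace ℝ X (ι t)) (hε : 0 < ε) :
    ∃ U : Set T, μ U ≠ 0 ∧ ∀ x ∈ U, ∀ y ∈ U, ‖ι x - ι y‖ ≤ ε := by
  have hsupp : μ μ.supportᶜ = 0 := Measure.measure_compl_support_of_regular
  have : Nonempty μ.support := by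
    refine nonempty_coe_sort.2 (nonempty_iff_ne_empty.2 fun h => hμ ?_)
    rwa [h, compl_empty, Measure.measure_univ_eq_zero] at hsupp
  have : CompactSpace μ.support := isCompact_iff_compactSpace.1 Measure.isClosed_support.isCompact
  obtain ⟨U, hU, ⟨x, hx⟩, hsmall⟩ := exists_isOpen_norm_sub_le (T := μ.support)
    (ι := fun t => ι t) (hι.comp continuous_subtype_val) hε
  obtain ⟨V, hV, rfl⟩ := isOpen_induced_iff.1 hU
  refine ⟨V ∩ μ.support, ?_, fun a ha b hb => hsmall ⟨a, ha.2⟩ ha.1 ⟨b, hb.2⟩ hb.1⟩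
  rw [measure_inter_conull hsupp]
  exact ((Measure.mem_support_iff_forall _).1 x.2 V (hV.mem_nhds hx)).ne'

end Fragmentability

section InvariantMeasure

variable {S : Type*} [TopologicalSpace S]

theorem nonneg_of_norm_le_one_of_map_one {Λ : (S →ᵇ ℝ) →L[ℝ] ℝ} (hΛ : ‖Λ‖ ≤ 1) (hΛ1 : Λ 1 = 1)
    {f : S →ᵇ ℝ} (hf : 0 ≤ f) : 0 ≤ Λ f := by
  have hnorm : ‖‖f‖ • (1 : S →ᵇ ℝ) - f‖ ≤ ‖f‖ := by
    refine (norm_le (norm_nonneg f)).2 fun s => ?_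
    have h0 : 0 ≤ f s := hf s
    have hle : f s ≤ ‖f‖ := (le_abs_self _).trans (f.norm_coe_le_norm s)
    simp only [coe_sub, coe_smul, coe_one, Pi.sub_apply, Pi.one_apply, smul_eq_mul, mul_one,
      Real.norm_eq_abs]
    rw [abs_of_nonneg (sub_nonneg.2 hle)]
    exact sub_le_self _ h0
  have hbound : ‖f‖ - Λ f ≤ ‖f‖ :=
    calc ‖f‖ - Λ f = Λ (‖f‖ • (1 : S →ᵇ ℝ) - f) := by
          rw [map_sub, map_smul, hΛ1, smul_eq_mul, mul_one]
      _ ≤ ‖Λ (‖f‖ • (1 : S →ᵇ ℝ) - f)‖ := le_abs_self _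
      _ ≤ ‖f‖ := (Λ.le_of_opNorm_le hΛ _).trans (by rwa [one_mul])
  linarith

/-- The real part of a functional on `C(S)`, restricted to the real-valued functions. -/
def realFunctional (m : (S →ᵇ ℂ) →L[ℂ] ℂ) : (S →ᵇ ℝ) →L[ℝ] ℝ :=
  Complex.reCLM ∘L m.restrictScalars ℝ ∘L Complex.ofRealCLM.compLeftContinuousBounded S

theorem realFunctional_apply (m : (S →ᵇ ℂ) →L[ℂ] ℂ) (f : S →ᵇ ℝ) :
    realFunctional m f = (m (Complex.ofRealCLM.compLeftContinuousBounded S f)).re := rfl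

theorem realFunctional_one {m : (S →ᵇ ℂ) →L[ℂ] ℂ} (hm : m 1 = 1) : realFunctional m 1 = 1 := by
  have hone : Complex.ofRealCLM.compLeftContinuousBounded S 1 = 1 := by ext; simp
  rw [realFunctional_apply, hone, hm, Complex.one_re]

theorem norm_realFunctional_le (m : (S →ᵇ ℂ) →L[ℂ] ℂ) : ‖realFunctional m‖ ≤ ‖m‖ := by
  refine ContinuousLinearMap.opNorm_le_bound _ (norm_nonneg m) fun f => ?_
  have hf : ‖Complex.ofRealCLM.compLeftContinuousBounded S f‖ ≤ ‖f‖ :=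
    (norm_le (norm_nonneg f)).2 fun s => by simpa using f.norm_coe_le_norm s
  exact (Complex.abs_re_le_norm _).trans (m.le_opNorm_of_le hf)

variable [Semigroup S]

theorem HasLIM.exists_real_mean (hLIM : HasLIM S (LUCset S)) :
    ∃ Λ : (S →ᵇ ℝ) →L[ℝ] ℝ, (∀ f, 0 ≤ f → 0 ≤ Λ f) ∧ Λ 1 = 1 ∧
      ∀ (f : S →ᵇ ℝ) (g : S → S →ᵇ ℝ), Continuous g → (∀ s t, g s t = f (s * t)) →
        ∀ s, Λ (g s) = Λ f := by
  obtain ⟨m, hm, hm1, hinv⟩ := hLIM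
  refine ⟨realFunctional m, fun f => nonneg_of_norm_le_one_of_map_one
    ((norm_realFunctional_le m).trans hm.le) (realFunctional_one hm1), realFunctional_one hm1,
    fun f g hg hfg s => congrArg Complex.re ?_⟩
  have htranslates : IsLTranslates S (Complex.ofRealCLM.compLeftContinuousBounded S f)
      fun s => Complex.ofRealCLM.compLeftContinuousBounded S (g s) :=
    fun s t => congrArg Complex.ofReal (hfg s t)
  exact hinv _ ⟨_, htranslates, (ContinuousLinearMap.continuous _).comp hg⟩ _ htranslates s

variable {T : Type*} [TopologicalSpace T] [CompactSpace T]

/-- Joint continuity and compactness make the orbit functions `s ↦ f (s • x)` belong to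
`LUC(S)`. -/
theorem HasLIM.exists_invariant_positiveLinearMap [SemigroupAction S T] [ContinuousSMul S T]
    [Nonempty T] (hLIM : HasLIM S (LUCset S)) :
    ∃ Λ : C(T, ℝ) →ₚ[ℝ] ℝ, Λ 1 = 1 ∧
      ∀ (s : S) (f : C(T, ℝ)), Λ (f.comp ⟨(s • ·), continuous_const_smul s⟩) = Λ f := by
  obtain ⟨x⟩ := ‹Nonempty T›
  obtain ⟨m, hpos, hm1, hinv⟩ := hLIM.exists_real_mean
  let orbit : C(S, T) := ⟨(· • x), continuous_id.smul continuous_const⟩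
  let pullback : C(T, ℝ) →L[ℝ] (S →ᵇ ℝ) := compContinuousCLM ℝ ℝ orbit ∘L
    (ContinuousMap.linearIsometryBoundedOfCompact T ℝ ℝ).toContinuousLinearEquiv
  let action : C(S × T, T) := ⟨fun q => q.1 • q.2, continuous_smul⟩
  refine ⟨PositiveLinearMap.mk₀ (m ∘L pullback) fun f hf => hpos _ fun s => hf (s • x), hm1,
    fun s f => ?_⟩
  exact hinv (pullback f) (fun s => pullback ((f.comp action).curry s))
    (pullback.continuous.comp (f.comp action).curry.continuous)
    (fun s t => congrArg f (mul_smul s t x).symm) s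

variable [T2Space T] [MeasurableSpace T] [BorelSpace T]

theorem exists_regular_integral_eq (Λ : C(T, ℝ) →ₚ[ℝ] ℝ) :
    ∃ μ : Measure T, μ.Regular ∧ ∀ f : C(T, ℝ), ∫ t, f t ∂μ = Λ f := by
  let Λ' : CompactlySupportedContinuousMap T ℝ →ₚ[ℝ] ℝ :=
    { toFun := fun f => Λ f.toContinuousMap
      map_add' := fun f g => map_add Λ f.toContinuousMap g.toContinuousMap
      map_smul' := fun c f => map_smul Λ c f.toContinuousMap
      monotone' := fun f g hfg => Λ.monotone' hfg }
  exact ⟨RealRMK.rieszMeasure Λ', inferInstance, fun f =>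
    RealRMK.integral_rieszMeasure Λ' (CompactlySupportedContinuousMap.continuousMapEquiv f)⟩

theorem measurePreserving_of_integral_comp_eq {μ : Measure T} [μ.Regular]
    {φ : T → T} (hφ : Continuous φ) (h : ∀ f : C(T, ℝ), ∫ t, f (φ t) ∂μ = ∫ t, f t ∂μ) :
    MeasurePreserving φ μ μ := by
  have : (μ.map φ).InnerRegular := Measure.InnerRegular.map_of_continuous hφ
  refine ⟨hφ.measurable, Measure.ext_of_integral_eq_on_compactlySupported fun f => ?_⟩
  exact (integral_map hφ.aemeasurable f.continuous.aestronglyMeasurable).trans (h f.toContinuousMap)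

theorem HasLIM.exists_invariant_measure [SemigroupAction S T] [ContinuousSMul S T] [Nonempty T]
    (hLIM : HasLIM S (LUCset S)) :
    ∃ μ : Measure T, IsProbabilityMeasure μ ∧ μ.Regular ∧ SMulInvariantMeasure S T μ := by
  obtain ⟨Λ, hΛ1, hΛ⟩ := hLIM.exists_invariant_positiveLinearMap (T := T)
  obtain ⟨μ, hreg, hμ⟩ := exists_regular_integral_eq Λ
  refine ⟨μ, ⟨?_⟩, hreg, ⟨fun s B hB => ?_⟩⟩
  · simpa [Measure.real, ENNReal.toReal_eq_one_iff, hΛ1] using hμ 1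
  · have hpres : MeasurePreserving (s • ·) μ μ :=
      measurePreserving_of_integral_comp_eq (continuous_const_smul s) fun f =>
        (hμ _).trans ((hΛ s f).trans (hμ f).symm)
    exact hpres.measure_preimage hB.nullMeasurableSet

end InvariantMeasure

section MeanSquareDistance

variable {X T : Type*} [NormedAddCommGroup X] [MeasurableSpace T] {μ : Measure T} {ι : T → X}

/-- The mean square distance from `x` to the points `ι t`, when `t` is distributed according to
`μ`. Integrability is not built in: the lemmas below assume it where they need it. -/
def meanSqDist (μ : Measure T) (ι : T → X) (x : X) : ℝ :=
  ∫ t, ‖x - ι t‖ ^ 2 ∂μ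

theorem continuous_meanSqDist [IsFiniteMeasure μ]
    (hint : ∀ x, Integrable (fun t => ‖x - ι t‖ ^ 2) μ) : Continuous (meanSqDist μ ι) := by
  refine continuous_iff_continuousAt.2 fun x₀ => continuousAt_of_dominated
    (bound := fun t => 2 * (1 + ‖x₀ - ι t‖ ^ 2)) (.of_forall fun x => (hint x).aestronglyMeasurable)
    ?_ (((integrable_const 1).add (hint x₀)).const_mul 2) (.of_forall fun t => by fun_prop)
  filter_upwards [Metric.ball_mem_nhds x₀ one_pos] with x hx
  refine .of_forall fun t => ?_
  have hx₀ : ‖x - x₀‖ ^ 2 ≤ 1 := pow_le_one₀ (norm_nonneg _) (mem_ball_iff_norm.1 hx).le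
  calc ‖‖x - ι t‖ ^ 2‖ = ‖x - ι t‖ ^ 2 := Real.norm_of_nonneg (sq_nonneg _)
    _ ≤ (‖x - x₀‖ + ‖x₀ - ι t‖) ^ 2 := by gcongr; exact norm_sub_le_norm_sub_add_norm_sub x x₀ (ι t)
    _ ≤ 2 * (‖x - x₀‖ ^ 2 + ‖x₀ - ι t‖ ^ 2) := add_sq_le
    _ ≤ 2 * (1 + ‖x₀ - ι t‖ ^ 2) := by gcongr

theorem meanSqDist_smul_le {S : Type*} [SMul S T] [MeasurableConstSMul S T]
    [SMulInvariantMeasure S T μ] (hint : ∀ x, Integrable (fun t => ‖x - ι t‖ ^ 2) μ) {s : S}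
    (hs : ∀ t t', ‖ι (s • t) - ι (s • t')‖ ≤ ‖ι t - ι t'‖) (t : T) :
    meanSqDist μ ι (ι (s • t)) ≤ meanSqDist μ ι (ι t) := by
  have hpres : MeasurePreserving (s • ·) μ μ := measurePreserving_smul s μ
  have hmap := hint (ι (s • t))
  rw [← hpres.map_eq] at hmap
  calc ∫ y, ‖ι (s • t) - ι y‖ ^ 2 ∂μ = ∫ y, ‖ι (s • t) - ι (s • y)‖ ^ 2 ∂μ := by
        conv_lhs => rw [← hpres.map_eq]
        exact integral_map hpres.aemeasurable hmap.aestronglyMeasurable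
    _ ≤ ∫ y, ‖ι t - ι y‖ ^ 2 ∂μ := integral_mono (hmap.comp_measurable hpres.measurable)
        (hint _) fun y => pow_le_pow_left₀ (norm_nonneg _) (hs t y) 2

variable [NormedSpace ℝ X]

theorem convexOn_meanSqDist (hint : ∀ x, Integrable (fun t => ‖x - ι t‖ ^ 2) μ) :
    ConvexOn ℝ univ (meanSqDist μ ι) := by
  refine integral_convexOn_of_integrand_ae convex_univ (.of_forall fun t => ?_) fun x _ => hint x
  simpa only [Pi.pow_def, dist_eq_norm] using
    (convexOn_dist (ι t) convex_univ).pow (fun _ _ => dist_nonneg) 2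

theorem two_mul_norm_midpoint_sub_sq_add_le (x y z : X) :
    2 * ‖midpoint ℝ x y - z‖ ^ 2 + (‖x - z‖ - ‖y - z‖) ^ 2 / 2 ≤ ‖x - z‖ ^ 2 + ‖y - z‖ ^ 2 := by
  have h : ‖midpoint ℝ x y - z‖ ≤ (‖x - z‖ + ‖y - z‖) / 2 := by
    simpa only [midpoint_self, dist_eq_norm, Real.norm_ofNat] using
      dist_midpoint_midpoint_le x y z z
  linarith [pow_le_pow_left₀ (norm_nonneg _) h 2]

theorem ae_norm_sub_eq_of_meanSqDist_add_le
    (hint : ∀ x, Integrable (fun t => ‖x - ι t‖ ^ 2) μ) {x y : X}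
    (hxy : meanSqDist μ ι x + meanSqDist μ ι y ≤ 2 * meanSqDist μ ι (midpoint ℝ x y)) :
    ∀ᵐ t ∂μ, ‖x - ι t‖ = ‖y - ι t‖ := by
  set gap : T → ℝ := fun t => ‖x - ι t‖ ^ 2 + ‖y - ι t‖ ^ 2 - 2 * ‖midpoint ℝ x y - ι t‖ ^ 2
  have hgap : ∀ t, (‖x - ι t‖ - ‖y - ι t‖) ^ 2 / 2 ≤ gap t := fun t =>
    le_sub_iff_add_le'.2 (two_mul_norm_midpoint_sub_sq_add_le x y (ι t))
  have hgap0 : 0 ≤ gap := fun t => (by positivity : (0 : ℝ) ≤ _).trans (hgap t)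
  have hsum : Integrable (fun t => ‖x - ι t‖ ^ 2 + ‖y - ι t‖ ^ 2) μ := (hint x).add (hint y)
  have hmid : Integrable (fun t => 2 * ‖midpoint ℝ x y - ι t‖ ^ 2) μ := (hint _).const_mul 2
  have hintegral : ∫ t, gap t ∂μ =
      meanSqDist μ ι x + meanSqDist μ ι y - 2 * meanSqDist μ ι (midpoint ℝ x y) := by
    rw [integral_sub hsum hmid, integral_add (hint x) (hint y), integral_const_mul]
    rfl
  have hzero : ∫ t, gap t ∂μ = 0 :=
    le_antisymm (hintegral ▸ sub_nonpos.2 hxy) (integral_nonneg hgap0)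
  filter_upwards [(integral_eq_zero_iff_of_nonneg hgap0 (hsum.sub hmid)).1 hzero] with t ht
  have hsq : (‖x - ι t‖ - ‖y - ι t‖) ^ 2 ≤ 0 := by linarith [hgap t, show gap t = 0 from ht]
  exact sub_eq_zero.1 (sq_nonpos_iff _ |>.1 hsq)

theorem integrable_norm_sub_sq [TopologicalSpace T] [CompactSpace T] [OpensMeasurableSpace T]
    [IsFiniteMeasure μ] (hι : Continuous fun t => toWeakSpace ℝ X (ι t)) (x : X) :
    Integrable (fun t => ‖x - ι t‖ ^ 2) μ := by
  obtain ⟨R, hR⟩ := isBounded_iff_forall_norm_le.1 (isBounded_range_of_weaklyContinuous hι)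
  refine .of_bound ((measurable_norm_sub hι x).pow_const 2).aestronglyMeasurable ((‖x‖ + R) ^ 2)
    (.of_forall fun t => ?_)
  rw [Real.norm_of_nonneg (sq_nonneg _)]
  gcongr
  exact (norm_sub_le _ _).trans (by gcongr; exact hR _ (mem_range_self t))

end MeanSquareDistance

section FixedPoint

variable {S X T : Type*} [NormedAddCommGroup X] [NormedSpace ℝ X] [TopologicalSpace T] {ι : T → X}

/-- The nonempty invariant sets on which a minimality argument is run: `T` parametrizes a weakly
compact convex subset of `X` through `ι`, and closedness is taken in `T`, i.e. weakly. -/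
structure IsClosedConvexInvariant (S : Type*) [SMul S T] (ι : T → X) (Z : Set T) : Prop where
  isClosed : IsClosed Z
  nonempty : Z.Nonempty
  convex_image : Convex ℝ (ι '' Z)
  smul_mem : ∀ (s : S), ∀ t ∈ Z, s • t ∈ Z

theorem isClosedConvexInvariant_univ [SMul S T] [Nonempty T] (hconv : Convex ℝ (range ι)) :
    IsClosedConvexInvariant S ι univ :=
  ⟨isClosed_univ, univ_nonempty, by rwa [image_univ], fun _ _ _ => mem_univ _⟩

theorem isClosedConvexInvariant_setOf_meanSqDist_le [SMul S T] [CompactSpace T]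
    [MeasurableSpace T] [BorelSpace T] [ContinuousConstSMul S T] {μ : Measure T}
    [IsFiniteMeasure μ] [SMulInvariantMeasure S T μ]
    (hι : Continuous fun t => toWeakSpace ℝ X (ι t)) (hconv : Convex ℝ (range ι))
    (hne : ∀ (s : S) t t', ‖ι (s • t) - ι (s • t')‖ ≤ ‖ι t - ι t'‖) (t₀ : T) :
    IsClosedConvexInvariant S ι {t | meanSqDist μ ι (ι t) ≤ meanSqDist μ ι (ι t₀)} := by
  have hint := integrable_norm_sub_sq (μ := μ) hι
  set B : Set X := {x | meanSqDist μ ι x ≤ meanSqDist μ ι (ι t₀)}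
  have hBclosed : IsClosed B := isClosed_le (continuous_meanSqDist hint) continuous_const
  have hBconv : Convex ℝ B := by
    simpa only [mem_univ, true_and] using
      (convexOn_meanSqDist hint).convex_le (meanSqDist μ ι (ι t₀))
  refine ⟨isClosed_preimage_of_convex hι hBconv hBclosed, ⟨t₀, le_refl (meanSqDist μ ι (ι t₀))⟩,
    ?_, fun s t ht => (meanSqDist_smul_le hint (hne s) t).trans ht⟩
  change Convex ℝ (ι '' (ι ⁻¹' B))
  rw [image_preimage_eq_inter_range]
  exact hBconv.inter hconv

theorem eq_of_forall_ae_norm_sub_eq [CompactSpace T] [T2Space T] [MeasurableSpace T]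
    {μ : Measure T} [μ.Regular] (hμ : μ ≠ 0)
    (hι : Continuous fun t => toWeakSpace ℝ X (ι t))
    (hequi : ∀ t t', ∀ᵐ y ∂μ, ‖ι t - ι y‖ = ‖ι t' - ι y‖) (a b : T) : ι a = ι b := by
  refine eq_of_forall_dist_le fun ε hε => ?_
  obtain ⟨U, hU, hsmall⟩ := exists_measure_ne_zero_norm_sub_le hμ hι (half_pos hε)
  obtain ⟨x, hx⟩ := nonempty_of_measure_ne_zero hU
  obtain ⟨y, hy, hay, hby⟩ :=
    ((frequently_ae_mem_iff.2 hU).and_eventually ((hequi a x).and (hequi b x))).exists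
  calc dist (ι a) (ι b) ≤ ‖ι a - ι y‖ + ‖ι b - ι y‖ := by
        simpa only [dist_eq_norm] using dist_triangle_right (ι a) (ι b) (ι y)
    _ = ‖ι x - ι y‖ + ‖ι x - ι y‖ := by rw [hay, hby]
    _ ≤ ε / 2 + ε / 2 := add_le_add (hsmall x hx y hy) (hsmall x hx y hy)
    _ = ε := add_halves ε

variable [CompactSpace T]

theorem exists_minimal_isClosedConvexInvariant [SMul S T] [Nonempty T]
    (hinj : Function.Injective ι) (hconv : Convex ℝ (range ι)) :
    ∃ Z, Minimal (IsClosedConvexInvariant S ι) Z := by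
  suffices hchain : ∀ c ⊆ {Z | IsClosedConvexInvariant S ι Z}, IsChain (· ⊆ ·) c → c.Nonempty →
      ∃ lb ∈ {Z | IsClosedConvexInvariant S ι Z}, ∀ Z ∈ c, lb ⊆ Z by
    obtain ⟨Z, -, hZ⟩ :=
      zorn_superset_nonempty _ hchain univ (isClosedConvexInvariant_univ hconv)
    exact ⟨Z, hZ⟩
  intro c hc hchain hne
  have : Nonempty c := hne.to_subtype
  refine ⟨⋂₀ c, ⟨isClosed_sInter fun Z hZ => (hc hZ).isClosed, ?_, ?_, ?_⟩,
    fun Z => sInter_subset_of_mem⟩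
  · exact IsCompact.nonempty_sInter_of_directed_nonempty_isCompact_isClosed
      (fun Z hZ W hW => (hchain.total hZ hW).elim (fun h => ⟨Z, hZ, subset_rfl, h⟩)
        fun h => ⟨W, hW, h, subset_rfl⟩) (fun Z hZ => (hc hZ).nonempty)
      (fun Z hZ => (hc hZ).isClosed.isCompact) (fun Z hZ => (hc hZ).isClosed)
  · rw [sInter_eq_iInter, hinj.injOn.image_iInter_eq]
    exact convex_iInter fun Z => (hc Z.2).convex_image
  · exact fun s t ht Z hZ => (hc hZ).smul_mem s t (ht Z hZ)

variable [Semigroup S] [TopologicalSpace S] [SemigroupAction S T]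

theorem subsingleton_of_minimal [ContinuousSMul S T] (hLIM : HasLIM S (LUCset S))
    (hinj : Function.Injective ι) (hι : Continuous fun t => toWeakSpace ℝ X (ι t))
    (hne : ∀ (s : S) t t', ‖ι (s • t) - ι (s • t')‖ ≤ ‖ι t - ι t'‖)
    (hmin : Minimal (IsClosedConvexInvariant S ι) univ) : Subsingleton T := by
  have : Nonempty T := hmin.prop.nonempty.to_type
  have : T2Space T := .of_injective_continuous ((toWeakSpace ℝ X).injective.comp hinj) hι
  borelize T
  have hconv : Convex ℝ (range ι) := image_univ ▸ hmin.prop.convex_image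
  obtain ⟨μ, _, _, _⟩ := hLIM.exists_invariant_measure (T := T)
  have hle : ∀ t t', meanSqDist μ ι (ι t) ≤ meanSqDist μ ι (ι t') := fun t t' =>
    hmin.2 (isClosedConvexInvariant_setOf_meanSqDist_le hι hconv hne t') (subset_univ _)
      (mem_univ t)
  have hequi : ∀ t t', ∀ᵐ y ∂μ, ‖ι t - ι y‖ = ‖ι t' - ι y‖ := by
    intro t t'
    obtain ⟨u, hu⟩ := hconv.midpoint_mem (mem_range_self t) (mem_range_self t')
    refine ae_norm_sub_eq_of_meanSqDist_add_le (integrable_norm_sub_sq hι) ?_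
    rw [← hu, two_mul]
    exact add_le_add (hle t u) (hle t' u)
  exact ⟨fun a b =>
    hinj (eq_of_forall_ae_norm_sub_eq (IsProbabilityMeasure.ne_zero μ) hι hequi a b)⟩

/-- The restriction of the action to an invariant set. -/
abbrev IsClosedConvexInvariant.semigroupAction {Z : Set T} (hZ : IsClosedConvexInvariant S ι Z) :
    SemigroupAction S Z where
  smul s z := ⟨s • z.1, hZ.smul_mem s z z.2⟩
  mul_smul s t z := Subtype.ext (mul_smul s t z.1)

theorem exists_forall_smul_eq_of_nonexpansive [ContinuousSMul S T] [Nonempty T]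
    (hLIM : HasLIM S (LUCset S))
    (hinj : Function.Injective ι) (hι : Continuous fun t => toWeakSpace ℝ X (ι t))
    (hconv : Convex ℝ (range ι))
    (hne : ∀ (s : S) t t', ‖ι (s • t) - ι (s • t')‖ ≤ ‖ι t - ι t'‖) :
    ∃ t : T, ∀ s : S, s • t = t := by
  obtain ⟨Z, hZ, hZmin⟩ := exists_minimal_isClosedConvexInvariant (S := S) hinj hconv
  let _ : SemigroupAction S Z := hZ.semigroupAction
  have : CompactSpace Z := isCompact_iff_compactSpace.1 hZ.isClosed.isCompact
  have : ContinuousSMul S Z :=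
    ⟨(continuous_fst.smul (continuous_subtype_val.comp continuous_snd)).subtype_mk _⟩
  have hmin : Minimal (IsClosedConvexInvariant S fun z : Z => ι z) univ := by
    have : Nonempty Z := hZ.nonempty.to_subtype
    refine ⟨isClosedConvexInvariant_univ (image_eq_range ι Z ▸ hZ.convex_image),
      fun W hW _ z _ => ?_⟩
    have himage : IsClosedConvexInvariant S ι (Subtype.val '' W) :=
      ⟨hZ.isClosed.isClosedEmbedding_subtypeVal.isClosedMap _ hW.isClosed, hW.nonempty.image _,
        by rw [image_image]; exact hW.convex_image,
        fun s => forall_mem_image.2 fun w hw => ⟨s • w, hW.smul_mem s w hw, rfl⟩⟩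
    obtain ⟨w, hw, hwz⟩ := hZmin himage (Subtype.coe_image_subset Z W) z.2
    rwa [← Subtype.ext hwz]
  have hsub : Subsingleton Z := subsingleton_of_minimal hLIM (hinj.comp Subtype.val_injective)
    (hι.comp continuous_subtype_val) (fun s t t' => hne s t t') hmin
  obtain ⟨z, hz⟩ := hZ.nonempty
  exact ⟨z, fun s => congrArg Subtype.val (hsub.elim (s • ⟨z, hz⟩) ⟨z, hz⟩)⟩

theorem exists_fixedPoint_of_isCompact_weakTop (hLIM : HasLIM S (LUCset S)) {K : Set X}
    (hK : @IsCompact X (weakTop ℝ X) K) (hKne : K.Nonempty) (hKconv : Convex ℝ K)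
    {π : S → X → X} (hmaps : ∀ s, MapsTo (π s) K K)
    (hact : ∀ s t, ∀ x ∈ K, π (s * t) x = π s (π t x))
    (hjoint : @ContinuousOn (S × X) X (@instTopologicalSpaceProd S X _ (weakTop ℝ X))
      (weakTop ℝ X) (fun q => π q.1 q.2) (univ ×ˢ K))
    (hne : ∀ s, ∀ x ∈ K, ∀ y ∈ K, ‖π s x - π s y‖ ≤ ‖x - y‖) : ∃ x ∈ K, ∀ s, π s x = x := by
  rw [weakTop_eq_weakSpace] at hK hjoint
  let _ : SemigroupAction S K :=
    { smul := fun s x => ⟨π s x, hmaps s x.2⟩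
      mul_smul := fun s t x => Subtype.ext (hact s t x x.2) }
  let _ : TopologicalSpace K := .induced (fun x => toWeakSpace ℝ X x) inferInstance
  have hι : Continuous fun x : K => toWeakSpace ℝ X x := continuous_induced_dom
  have : CompactSpace K := @isCompact_iff_compactSpace (WeakSpace ℝ X) _ K |>.1 hK
  have : Nonempty K := hKne.to_subtype
  have hπ : ContinuousOn (fun q : S × WeakSpace ℝ X =>
      toWeakSpace ℝ X (π q.1 ((toWeakSpace ℝ X).symm q.2)))
      (univ ×ˢ ((toWeakSpace ℝ X).symm ⁻¹' K)) := hjoint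
  have : ContinuousSMul S K := ⟨continuous_induced_rng.2 <|
    hπ.comp_continuous (continuous_fst.prodMk (hι.comp continuous_snd))
      fun q => ⟨mem_univ _, q.2.2⟩⟩
  obtain ⟨x, hx⟩ := exists_forall_smul_eq_of_nonexpansive (T := K) hLIM Subtype.val_injective hι
    (by rwa [Subtype.range_coe]) fun s x y => hne s x x.2 y y.2
  exact ⟨x, x.2, fun s => congrArg Subtype.val (hx s)⟩

end FixedPoint

section ChebyshevCenter

variable {X : Type*} [NormedAddCommGroup X] {C A : Set X} {r : ℝ}

theorem bddAbove_range_norm_sub (hA : Bornology.IsBounded A) (x : X) :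
    BddAbove (range fun y : A => ‖x - y‖) := by
  obtain ⟨R, hR⟩ := isBounded_iff_forall_norm_le.1 hA
  refine ⟨‖x‖ + R, forall_mem_range.2 fun y => ?_⟩
  exact (norm_sub_le _ _).trans (by gcongr; exact hR y y.2)

theorem bddBelow_range_iSup_norm_sub :
    BddBelow (range fun x : C => ⨆ y : A, ‖(x : X) - y‖) :=
  ⟨0, forall_mem_range.2 fun _ => Real.iSup_nonneg fun _ => norm_nonneg _⟩

theorem chebyshevRadius_le_of_forall (hAne : A.Nonempty) {x : X} (hx : x ∈ C)
    (h : ∀ y ∈ A, ‖x - y‖ ≤ r) : chebyshevRadius C A ≤ r := by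
  have : Nonempty A := hAne.to_subtype
  exact (ciInf_le bddBelow_range_iSup_norm_sub ⟨x, hx⟩).trans (ciSup_le fun y => h y y.2)

theorem exists_forall_norm_sub_le_of_chebyshevRadius_lt (hC : C.Nonempty)
    (hA : Bornology.IsBounded A) (hr : chebyshevRadius C A < r) :
    ∃ x ∈ C, ∀ y ∈ A, ‖x - y‖ ≤ r := by
  have : Nonempty C := hC.to_subtype
  obtain ⟨x, hx⟩ := exists_lt_of_ciInf_lt hr
  exact ⟨x, x.2, fun y hy => (le_ciSup (bddAbove_range_norm_sub hA x) ⟨y, hy⟩).trans hx.le⟩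

theorem mem_chebyshevCenter_iff (hAne : A.Nonempty) (hA : Bornology.IsBounded A) {x : X} :
    x ∈ chebyshevCenter C A ↔ x ∈ C ∧ ∀ y ∈ A, ‖x - y‖ ≤ chebyshevRadius C A := by
  have : Nonempty A := hAne.to_subtype
  refine and_congr_right fun hx => ⟨fun h y hy => ?_, fun h => ?_⟩
  · rw [← h]
    exact le_ciSup (bddAbove_range_norm_sub hA x) ⟨y, hy⟩
  · exact le_antisymm (ciSup_le fun y => h y y.2) (ciInf_le bddBelow_range_iSup_norm_sub ⟨x, hx⟩)

theorem chebyshevCenter_subset : chebyshevCenter C A ⊆ C :=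
  fun _ hx => hx.1

theorem mapsTo_chebyshevCenter (hAne : A.Nonempty) (hA : Bornology.IsBounded A) (hAC : A ⊆ C)
    {f : X → X} (hf : MapsTo f C C) (hne : ∀ x ∈ C, ∀ y ∈ C, ‖f x - f y‖ ≤ ‖x - y‖)
    (hfA : A ⊆ f '' A) : MapsTo f (chebyshevCenter C A) (chebyshevCenter C A) := by
  intro x hx
  obtain ⟨hxC, hxA⟩ := (mem_chebyshevCenter_iff hAne hA).1 hx
  refine (mem_chebyshevCenter_iff hAne hA).2 ⟨hf hxC, fun y hy => ?_⟩
  obtain ⟨y', hy', rfl⟩ := hfA hy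
  exact (hne x hxC y' (hAC hy')).trans (hxA y' hy')

variable [NormedSpace ℝ X]

theorem convex_chebyshevCenter (hC : Convex ℝ C) (hAne : A.Nonempty)
    (hA : Bornology.IsBounded A) : Convex ℝ (chebyshevCenter C A) := by
  have : chebyshevCenter C A = C ∩ ⋂ y ∈ A, Metric.closedBall y (chebyshevRadius C A) := by
    ext x
    simp only [mem_chebyshevCenter_iff hAne hA, mem_inter_iff, mem_iInter, mem_closedBall_iff_norm]
  rw [this]
  exact hC.inter (convex_iInter₂ fun y _ => convex_closedBall y _)

/-- The points of the weak* closure of `C` in the bidual whose distance to every point of `A` is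
at most `r`. For `r` the Chebyshev radius this is the bidual version of the Chebyshev center; its
weak* compactness is inherited from the balls of the bidual. -/
def bidualCenter (C A : Set X) (r : ℝ) : Set (WeakDual ℝ (StrongDual ℝ X)) :=
  closure ((fun x => StrongDual.toWeakDual (NormedSpace.inclusionInDoubleDual ℝ X x)) '' C) ∩
    ⋂ y ∈ A, WeakDual.toStrongDual ⁻¹'
      Metric.closedBall (NormedSpace.inclusionInDoubleDual ℝ X y) r

theorem isClosed_bidualCenter : IsClosed (bidualCenter C A r) :=
  isClosed_closure.inter (isClosed_biInter fun _ _ => WeakDual.isClosed_closedBall _ r)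

theorem isCompact_bidualCenter (hAne : A.Nonempty) : IsCompact (bidualCenter C A r) := by
  obtain ⟨y, hy⟩ := hAne
  exact (WeakDual.isCompact_closedBall _ r).of_isClosed_subset isClosed_bidualCenter
    fun z hz => mem_iInter₂.1 hz.2 y hy

theorem bidualCenter_mono : Monotone (bidualCenter C A) := fun _ _ hr =>
  inter_subset_inter_right _ <| iInter₂_mono fun _ _ =>
    preimage_mono (Metric.closedBall_subset_closedBall hr)

theorem norm_inclusionInDoubleDual_sub (x y : X) : ‖NormedSpace.inclusionInDoubleDual ℝ X x -
    NormedSpace.inclusionInDoubleDual ℝ X y‖ = ‖x - y‖ := by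
  rw [← map_sub]
  exact (NormedSpace.inclusionInDoubleDualLi ℝ).norm_map (x - y)

theorem toWeakDual_mem_bidualCenter {x : X} (hx : x ∈ C) (h : ∀ y ∈ A, ‖x - y‖ ≤ r) :
    StrongDual.toWeakDual (NormedSpace.inclusionInDoubleDual ℝ X x) ∈ bidualCenter C A r := by
  refine ⟨subset_closure (mem_image_of_mem _ hx), mem_iInter₂.2 fun y hy => ?_⟩
  refine (mem_closedBall_iff_norm (E := StrongDual ℝ (StrongDual ℝ X))).2 ?_
  exact (norm_inclusionInDoubleDual_sub x y).trans_le (h y hy)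

theorem nonempty_bidualCenter_chebyshevRadius (hC : C.Nonempty) (hAne : A.Nonempty)
    (hA : Bornology.IsBounded A) : (bidualCenter C A (chebyshevRadius C A)).Nonempty := by
  set r := chebyshevRadius C A
  obtain ⟨u, hanti, hgt, hlim⟩ := exists_seq_strictAnti_tendsto r
  obtain ⟨z, hz⟩ : (⋂ n, bidualCenter C A (u n)).Nonempty := by
    refine IsCompact.nonempty_iInter_of_sequence_nonempty_isCompact_isClosed _
      (fun n => bidualCenter_mono (hanti.antitone n.le_succ)) (fun n => ?_)
      (isCompact_bidualCenter hAne) fun n => isClosed_bidualCenter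
    obtain ⟨x, hx, h⟩ := exists_forall_norm_sub_le_of_chebyshevRadius_lt hC hA (hgt n)
    exact ⟨_, toWeakDual_mem_bidualCenter hx h⟩
  rw [mem_iInter] at hz
  exact ⟨z, (hz 0).1, mem_iInter₂.2 fun y hy =>
    ge_of_tendsto' hlim fun n => mem_iInter₂.1 (hz n).2 y hy⟩

namespace LEmbeddedSet

theorem exists_add_norm_le_of_mem_bidualCenter (hL : LEmbeddedSet C)
    {z : WeakDual ℝ (StrongDual ℝ X)} (hz : z ∈ bidualCenter C A r) :
    ∃ c ∈ C, ∃ ξ : StrongDual ℝ (StrongDual ℝ X),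
      WeakDual.toStrongDual z = NormedSpace.inclusionInDoubleDual ℝ X c + ξ ∧
      ∀ y ∈ A, ‖c - y‖ + ‖ξ‖ ≤ r := by
  obtain ⟨Xs, -, hnorm, hcl⟩ := hL
  obtain ⟨c, hc, ξ, hξ, hzc⟩ : ∃ c ∈ C, ∃ ξ ∈ Xs,
      WeakDual.toStrongDual z = NormedSpace.inclusionInDoubleDual ℝ X c + ξ := hcl hz.1
  refine ⟨c, hc, ξ, hzc, fun y hy => ?_⟩
  have hdist : ‖WeakDual.toStrongDual z - NormedSpace.inclusionInDoubleDual ℝ X y‖ ≤ r :=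
    (mem_closedBall_iff_norm (E := StrongDual ℝ (StrongDual ℝ X))).1 (mem_iInter₂.1 hz.2 y hy)
  have hsplit : WeakDual.toStrongDual z - NormedSpace.inclusionInDoubleDual ℝ X y =
      NormedSpace.inclusionInDoubleDual ℝ X (c - y) + ξ := by
    rw [hzc, map_sub]
    abel
  rwa [hsplit, hnorm _ ξ hξ, map_sub, norm_inclusionInDoubleDual_sub] at hdist

theorem bidualCenter_chebyshevRadius (hL : LEmbeddedSet C) (hAne : A.Nonempty)
    (hA : Bornology.IsBounded A) : bidualCenter C A (chebyshevRadius C A) =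
      (fun x => StrongDual.toWeakDual (NormedSpace.inclusionInDoubleDual ℝ X x)) ''
        chebyshevCenter C A := by
  refine Subset.antisymm (fun z hz => ?_) (image_subset_iff.2 fun x hx => ?_)
  · obtain ⟨c, hc, ξ, hzc, hcA⟩ := hL.exists_add_norm_le_of_mem_bidualCenter hz
    have hle : chebyshevRadius C A ≤ chebyshevRadius C A - ‖ξ‖ :=
      chebyshevRadius_le_of_forall hAne hc fun y hy => le_sub_iff_add_le.2 (hcA y hy)
    obtain rfl : ξ = 0 := (norm_le_zero_iff (E := StrongDual ℝ (StrongDual ℝ X))).1 (by linarith)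
    refine ⟨c, (mem_chebyshevCenter_iff hAne hA).2 ⟨hc, fun y hy => ?_⟩, ?_⟩
    · exact (le_add_of_nonneg_right (ContinuousLinearMap.opNorm_nonneg _)).trans (hcA y hy)
    · rw [add_zero] at hzc
      exact hzc.symm
  · obtain ⟨hxC, hxA⟩ := (mem_chebyshevCenter_iff hAne hA).1 hx
    exact toWeakDual_mem_bidualCenter hxC hxA

theorem nonempty_chebyshevCenter (hL : LEmbeddedSet C) (hC : C.Nonempty) (hAne : A.Nonempty)
    (hA : Bornology.IsBounded A) : (chebyshevCenter C A).Nonempty := by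
  have hne := nonempty_bidualCenter_chebyshevRadius hC hAne hA
  rwa [hL.bidualCenter_chebyshevRadius hAne hA, image_nonempty] at hne

theorem isCompact_chebyshevCenter (hL : LEmbeddedSet C) (hAne : A.Nonempty)
    (hA : Bornology.IsBounded A) : @IsCompact X (weakTop ℝ X) (chebyshevCenter C A) := by
  rw [weakTop_eq_weakSpace]
  refine (NormedSpace.isEmbedding_inclusionInDoubleDualWeak ℝ X).isInducing.isCompact_iff.2 ?_
  have hcompact := isCompact_bidualCenter (C := C) (r := chebyshevRadius C A) hAne
  rwa [hL.bidualCenter_chebyshevRadius hAne hA] at hcompact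

end LEmbeddedSet

end ChebyshevCenter

theorem fixedPoint_in_chebyshevCenter_of_LUC_hasLIM_general {S X : Type*} [Semigroup S]
    [TopologicalSpace S] [NormedAddCommGroup X] [NormedSpace ℝ X] {C : Set X}
    (hCcv : Convex ℝ C) (hLemb : LEmbeddedSet C) {π : S → X → X}
    (hinv : ∀ s : S, MapsTo (π s) C C)
    (hact : ∀ s t : S, ∀ x ∈ C, π (s * t) x = π s (π t x))
    (hjoint : @ContinuousOn (S × X) X (@instTopologicalSpaceProd S X _ (weakTop ℝ X))
      (weakTop ℝ X) (fun q => π q.1 q.2) (univ ×ˢ C))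
    (hne : ∀ s : S, ∀ x ∈ C, ∀ y ∈ C, ‖π s x - π s y‖ ≤ ‖x - y‖)
    (hLIM : HasLIM S (LUCset S)) {A : Set X} (hAC : A ⊆ C) (hAne : A.Nonempty)
    (hAbdd : Bornology.IsBounded A) (hA : ∀ s : S, A ⊆ π s '' A) :
    ∃ x ∈ chebyshevCenter C A, ∀ s : S, π s x = x := by
  have hEC : chebyshevCenter C A ⊆ C := chebyshevCenter_subset
  exact exists_fixedPoint_of_isCompact_weakTop hLIM
    (hLemb.isCompact_chebyshevCenter hAne hAbdd)
    (hLemb.nonempty_chebyshevCenter (hAne.mono hAC) hAne hAbdd)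
    (convex_chebyshevCenter hCcv hAne hAbdd)
    (fun s => mapsTo_chebyshevCenter hAne hAbdd hAC (hinv s) (hne s) (hA s))
    (fun s t x hx => hact s t x (hEC hx))
    (@ContinuousOn.mono _ _ (_) (_) _ _ _ hjoint (prod_mono_right hEC))
    fun s x hx y hy => hne s x (hEC hx) y (hEC hy)

/-- **Theorem (L-em)**: Let `C` be a bounded convex `L`-embedded subset of a Banach space `X`
and `(S,(C,weak))` a nonexpansive, jointly weakly continuous dynamical system.  If `LUC(S)` has
a left invariant mean and `C` contains a nonempty bounded subset `A` with `s(A) = A` for all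
`s ∈ S`, then `S` has a fixed point in the Chebyshev center `E_C(A)`. -/
theorem fixedPoint_in_chebyshevCenter_of_LUC_hasLIM
    {S : Type u} [Semigroup S] [TopologicalSpace S] [T2Space S]
    (hS : IsSemitopologicalSemigroup S)
    {X : Type v} [NormedAddCommGroup X] [NormedSpace ℝ X] [CompleteSpace X]
    (C : Set X)
    -- `C` is a nonempty bounded convex `L`-embedded set
    (hCne : C.Nonempty) (hCbdd : Bornology.IsBounded C) (hCcv : Convex ℝ C)
    (hLemb : LEmbeddedSet C)
    (π : S → X → X)
    -- `(S,(C,weak))` is a dynamical system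
    (hinv : ∀ s : S, MapsTo (π s) C C)
    (hact : ∀ s t : S, ∀ x ∈ C, π (s * t) x = π s (π t x))
    -- the action is jointly continuous when `C` carries the weak topology
    (hjoint : @ContinuousOn (S × X) X (@instTopologicalSpaceProd S X _ (weakTop ℝ X))
      (weakTop ℝ X) (fun q => π q.1 q.2) (Set.univ ×ˢ C))
    -- the system is nonexpansive
    (hne : ∀ s : S, ∀ x ∈ C, ∀ y ∈ C, ‖π s x - π s y‖ ≤ ‖x - y‖)
    -- `LUC(S)` has a left invariant mean
    (hLIM : HasLIM S (LUCset S))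
    -- `A ⊆ C` is a nonempty bounded set with `s(A) = A` for all `s`
    (A : Set X) (hAC : A ⊆ C) (hAne : A.Nonempty) (hAbdd : Bornology.IsBounded A)
    (hAinv : ∀ s : S, π s '' A = A) :
    ∃ x ∈ chebyshevCenter C A, ∀ s : S, π s x = x :=
  fixedPoint_in_chebyshevCenter_of_LUC_hasLIM_general hCcv hLemb hinv hact hjoint hne hLIM hAC hAne
    hAbdd fun s => (hAinv s).ge
end
end

section
/- Let S be a semitopological semigroup and let (S,(K,weak*)) be a nonexpansive dynamical system, where K is a weak* compact convex subset of the dual space X* of an M-embedded Banach space X. Suppose AP(S) has a left invariant mean and the translations λ_s: K → K, λ_s(x) = sx, are equicontinuous in the weak* topology. Then there is x ∈ K with sx = x for all s ∈ S, and the fixed point set F(S) = {x ∈ K : sx = x for all s ∈ S} is a nonexpansive retract of K, i.e., there is a map r: K → K with r(K) ⊆ F(S), r ∘ r = r, r fixing F(S) pointwise, and ‖r(x) − r(y)‖ ≤ ‖x − y‖ for all x, y ∈ K. -/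
open Set MeasureTheory BoundedContinuousFunction

noncomputable section

universe u v

set_option maxSynthPendingDepth 3 in
/-- A Banach space `X` is `M`-embedded if `X` is an `M`-ideal in its bidual, i.e.
`X*** = X* ⊕₁ X^⊥`. -/
def MEmbeddedSpace (X : Type v) [NormedAddCommGroup X] [NormedSpace ℝ X] : Prop :=
  -- every `F ∈ X***` decomposes as `F = g + H` with `g` in the canonical image of `X*`
  -- and `H ∈ X^⊥`
  (∀ F : StrongDual ℝ (StrongDual ℝ (StrongDual ℝ X)),
    ∃ (g : StrongDual ℝ X)
      (H : StrongDual ℝ (StrongDual ℝ (StrongDual ℝ X))),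
      (∀ x : X, H (NormedSpace.inclusionInDoubleDual ℝ X x) = 0) ∧
      F = NormedSpace.inclusionInDoubleDual ℝ (StrongDual ℝ X) g + H) ∧
  -- and the decomposition is an `ℓ¹`-decomposition
  (∀ (g : StrongDual ℝ X)
      (H : StrongDual ℝ (StrongDual ℝ (StrongDual ℝ X))),
    (∀ x : X, H (NormedSpace.inclusionInDoubleDual ℝ X x) = 0) →
    ‖NormedSpace.inclusionInDoubleDual ℝ (StrongDual ℝ X) g + H‖ =
      ‖NormedSpace.inclusionInDoubleDual ℝ (StrongDual ℝ X) g‖ + ‖H‖)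

/-!
Pointwise limits of the translations form a semigroup `T`, which equicontinuity makes a compact
topological semigroup. Evaluating the left invariant mean at continuous functions on `T` shows that
any two closed right ideals of `T` meet, so `T` has a left ideal that is a compact group `G`. Hence
every nonempty closed invariant set contains a weak* compact set `M`, an orbit of `G`, that each
translation maps onto itself.

In the dual of an `M`-embedded space, weak* convergence without loss of norm is weak convergence.
On a separable closed subgroup of `G` the norm along the orbit is lower semicontinuous, hence
continuous at a residual set of points, so the orbit lies residually in a norm separable subspace;
by Baire category it has small norm oscillation on some open set, and translating that set shows
that `M` is norm totally bounded. If `M` were not a point, DeMarr's argument would provide `u` in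
its convex hull and `ρ < diam M` with `M` inside the ball of radius `ρ` about `u`, and in a minimal
closed convex invariant set the points with the property of `u` would form a smaller one. So every
nonempty closed convex invariant set contains a fixed point.

Following Bruck, take an element `r` of a minimal left ideal of the compact convex monoid of
nonexpansive maps that fix the common fixed points. The orbit of `r q` under that monoid is closed,
convex and invariant, hence contains a fixed point `f (r q)`; minimality gives `g` with
`g ∘ f ∘ r = r`, whence `r q = g (f (r q)) = f (r q)` is fixed.
-/

open Filter Topology TopologicalSpace

section Functionals

variable {X : Type*} [NormedAddCommGroup X] [NormedSpace ℝ X]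

variable (X) in
theorem lowerSemicontinuous_norm_toStrongDual :
    LowerSemicontinuous fun m : WeakDual ℝ X => ‖WeakDual.toStrongDual m‖ := by
  refine lowerSemicontinuous_iff_isClosed_preimage.2 fun c => ?_
  convert WeakDual.isClosed_closedBall (𝕜 := ℝ) (0 : StrongDual ℝ X) c using 1
  ext m
  simp

variable (X) in
theorem lowerSemicontinuous_dist_toStrongDual :
    LowerSemicontinuous fun m : WeakDual ℝ X × WeakDual ℝ X =>
      dist (WeakDual.toStrongDual m.1) (WeakDual.toStrongDual m.2) := by
  simp only [dist_eq_norm, ← map_sub]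
  exact (lowerSemicontinuous_norm_toStrongDual X).comp (continuous_fst.sub continuous_snd)

set_option maxSynthPendingDepth 3 in
theorem MEmbeddedSpace.eq_inclusionInDoubleDual (hM : MEmbeddedSpace X)
    {F : StrongDual ℝ (StrongDual ℝ (StrongDual ℝ X))} {m : StrongDual ℝ X}
    (hFm : ∀ x, F (NormedSpace.inclusionInDoubleDual ℝ X x) = m x) (hF : ‖F‖ ≤ ‖m‖) :
    F = NormedSpace.inclusionInDoubleDual ℝ (StrongDual ℝ X) m := by
  obtain ⟨g, H, hH, rfl⟩ := hM.1 F
  obtain rfl : g = m := by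
    ext x
    simpa [hH x] using hFm x
  have hg : ‖NormedSpace.inclusionInDoubleDual ℝ (StrongDual ℝ X) g‖ = ‖g‖ :=
    (NormedSpace.inclusionInDoubleDualLi (E := StrongDual ℝ X) ℝ).norm_map g
  have hH0 : H = 0 := norm_le_zero_iff.1 (by linarith [hM.2 g H hH])
  rw [hH0, add_zero]

set_option maxSynthPendingDepth 3 in
theorem MEmbeddedSpace.tendsto_apply (hM : MEmbeddedSpace X) {α : Type*} {l : Filter α}
    {φ : α → WeakDual ℝ X} {m : WeakDual ℝ X} (hφ : Tendsto φ l (𝓝 m))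
    (hnorm : Tendsto (fun a => ‖WeakDual.toStrongDual (φ a)‖) l (𝓝 ‖WeakDual.toStrongDual m‖))
    (ψ : StrongDual ℝ (StrongDual ℝ X)) :
    Tendsto (fun a => ψ (WeakDual.toStrongDual (φ a))) l (𝓝 (ψ (WeakDual.toStrongDual m))) := by
  -- A weak* limit `F` in `X***` extends `m` from `X` without increasing the norm, so `F = m`.
  refine (tendsto_iff_ultrafilter _ _ _).2 fun U hU => ?_
  let J : α → WeakDual ℝ (StrongDual ℝ (StrongDual ℝ X)) := fun a =>
    StrongDual.toWeakDual
      (NormedSpace.inclusionInDoubleDual ℝ (StrongDual ℝ X) (WeakDual.toStrongDual (φ a)))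
  have hJ (a : α) : ‖WeakDual.toStrongDual (J a)‖ ≤ ‖WeakDual.toStrongDual (φ a)‖ :=
    NormedSpace.double_dual_bound ℝ (StrongDual ℝ X) _
  have hbdd : ∀ᶠ a in (U : Filter α), J a ∈ WeakDual.toStrongDual ⁻¹'
      Metric.closedBall (0 : StrongDual ℝ (StrongDual ℝ (StrongDual ℝ X)))
        (‖WeakDual.toStrongDual m‖ + 1) := by
    filter_upwards [hU (hnorm.eventually_le_const (lt_add_one _))] with a ha
    simpa using (hJ a).trans ha
  obtain ⟨F, -, hF⟩ := (WeakDual.isCompact_closedBall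
    (0 : StrongDual ℝ (StrongDual ℝ (StrongDual ℝ X))) _).ultrafilter_le_nhds' (U.map J) hbdd
  have hFev (θ : StrongDual ℝ (StrongDual ℝ X)) :
      Tendsto (fun a => θ (WeakDual.toStrongDual (φ a))) U (𝓝 (F θ)) :=
    ((WeakDual.eval_continuous θ).tendsto F).comp hF
  have hFnorm : ‖WeakDual.toStrongDual F‖ ≤ ‖WeakDual.toStrongDual m‖ := by
    refine le_of_forall_lt_imp_le_of_dense fun c hc => ge_of_tendsto (hnorm.mono_left hU) ?_
    filter_upwards [hF (lowerSemicontinuous_norm_toStrongDual _ F c hc)] with a ha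
    exact (le_of_lt ha).trans (hJ a)
  have hFm := hM.eq_inclusionInDoubleDual (F := WeakDual.toStrongDual F) (fun x =>
    tendsto_nhds_unique (hFev (NormedSpace.inclusionInDoubleDual ℝ X x))
      (((WeakDual.eval_continuous x).tendsto m).comp (hφ.mono_left hU))) hFnorm
  exact (DFunLike.congr_fun hFm ψ : F ψ = ψ (WeakDual.toStrongDual m)) ▸ hFev ψ

theorem MEmbeddedSpace.mem_of_tendsto (hM : MEmbeddedSpace X) {α : Type*} {l : Filter α} [l.NeBot]
    {φ : α → WeakDual ℝ X} {m : WeakDual ℝ X} (hφ : Tendsto φ l (𝓝 m))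
    (hnorm : Tendsto (fun a => ‖WeakDual.toStrongDual (φ a)‖) l (𝓝 ‖WeakDual.toStrongDual m‖))
    {C : Set (StrongDual ℝ X)} (hCcv : Convex ℝ C) (hCcl : IsClosed C)
    (hC : ∀ᶠ a in l, WeakDual.toStrongDual (φ a) ∈ C) : WeakDual.toStrongDual m ∈ C := by
  by_contra hm
  obtain ⟨ψ, u, hψC, hψm⟩ := geometric_hahn_banach_closed_point hCcv hCcl hm
  refine hψm.not_ge (le_of_tendsto (hM.tendsto_apply hφ hnorm ψ) ?_)
  filter_upwards [hC] with a ha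
  exact (hψC _ ha).le

theorem eventually_residual_continuousAt_of_lowerSemicontinuous {T : Type*} [TopologicalSpace T]
    {f : T → ℝ} (hf : LowerSemicontinuous f) : ∀ᶠ t in residual T, ContinuousAt f t := by
  have hcl (q : ℚ) : IsClosed {t | f t ≤ q} := hf.isClosed_preimage q
  have hfr (q : ℚ) : ∀ᶠ t in residual T, t ∉ frontier {t | f t ≤ q} :=
    residual_of_dense_open isClosed_frontier.isOpen_compl
      (interior_eq_empty_iff_dense_compl.1 (interior_frontier (hcl q)))
  filter_upwards [eventually_countable_forall.2 hfr] with t ht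
  refine continuousAt_iff_lower_upperSemicontinuousAt.2 ⟨hf t, fun y hy => ?_⟩
  obtain ⟨q, hq, hqy⟩ := exists_rat_btwn hy
  have htq : t ∈ interior {t | f t ≤ q} := by
    by_contra h
    exact ht q ((hcl q).frontier_eq ▸ ⟨hq.le, h⟩)
  filter_upwards [mem_interior_iff_mem_nhds.1 htq] with t' ht'
  exact lt_of_le_of_lt ht' hqy

theorem MEmbeddedSpace.exists_isOpen_forall_dist_le (hM : MEmbeddedSpace X) {T : Type*}
    [TopologicalSpace T] [BaireSpace T] [SeparableSpace T] [Nonempty T] {φ : T → WeakDual ℝ X}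
    (hφ : Continuous φ) {ε : ℝ} (hε : 0 < ε) :
    ∃ V : Set T, IsOpen V ∧ V.Nonempty ∧ ∀ s ∈ V, ∀ t ∈ V,
      dist (WeakDual.toStrongDual (φ s)) (WeakDual.toStrongDual (φ t)) ≤ ε := by
  let L : Submodule ℝ (StrongDual ℝ X) :=
    (Submodule.span ℝ (range fun n => WeakDual.toStrongDual (φ (denseSeq T n)))).topologicalClosure
  have hmemL : ∀ᶠ t in residual T, WeakDual.toStrongDual (φ t) ∈ L := by
    filter_upwards [eventually_residual_continuousAt_of_lowerSemicontinuous
      ((lowerSemicontinuous_norm_toStrongDual X).comp hφ)] with t ht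
    have : NeBot (𝓝[range (denseSeq T)] t) :=
      mem_closure_iff_nhdsWithin_neBot.1 (denseRange_denseSeq T t)
    refine hM.mem_of_tendsto (l := 𝓝[range (denseSeq T)] t)
      ((hφ.tendsto t).mono_left nhdsWithin_le_nhds) (ht.tendsto.mono_left nhdsWithin_le_nhds)
      L.convex (Submodule.isClosed_topologicalClosure _) ?_
    filter_upwards [self_mem_nhdsWithin]
    rintro _ ⟨n, rfl⟩
    exact Submodule.le_topologicalClosure _ (Submodule.subset_span ⟨n, rfl⟩)
  obtain ⟨c, hc, hLc⟩ : IsSeparable (L : Set (StrongDual ℝ X)) :=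
    (countable_range _).isSeparable.span.closure
  let A (y : StrongDual ℝ X) : Set T := {t | dist (WeakDual.toStrongDual (φ t)) y ≤ ε / 2}
  have hAcl (y : StrongDual ℝ X) : IsClosed (A y) :=
    ((lowerSemicontinuous_dist_toStrongDual X).comp
      (hφ.prodMk (continuous_const (y := StrongDual.toWeakDual y)))).isClosed_preimage (ε / 2)
  obtain ⟨E, hE, hEG, hEd⟩ := mem_residual.1 hmemL
  have hEA : E ⊆ ⋃ y ∈ c, A y := fun t ht => by
    obtain ⟨y, hy, hty⟩ := Metric.mem_closure_iff.1 (hLc (hE ht)) (ε / 2) (half_pos hε)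
    exact mem_biUnion hy hty.le
  obtain ⟨t, ht⟩ := (hEG.dense_biUnion_interior_of_closed hEd hc (fun y _ => hAcl y) hEA).nonempty
  obtain ⟨y, -, hty⟩ := mem_iUnion₂.1 ht
  refine ⟨interior (A y), isOpen_interior, ⟨t, hty⟩, fun s hs t ht => ?_⟩
  have hsy : dist _ y ≤ ε / 2 := interior_subset (s := A y) hs
  have hty : dist _ y ≤ ε / 2 := interior_subset (s := A y) ht
  linarith [dist_triangle_right (WeakDual.toStrongDual (φ s)) (WeakDual.toStrongDual (φ t)) y]

end Functionals

section CompactGroup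

theorem isTopologicalGroup_of_compactSpace (G : Type*) [Group G] [TopologicalSpace G]
    [CompactSpace G] [T2Space G] [ContinuousMul G] : IsTopologicalGroup G where
  continuous_inv := by
    let F : G × G ≃ G × G := Equiv.prodShear (Equiv.refl G) Equiv.mulLeft
    have hF : Continuous F := continuous_fst.prodMk continuous_mul
    have hFsymm : Continuous F.symm := (hF.homeoOfEquivCompactToT2).symm.continuous
    have hinv : Continuous fun g : G => (F.symm (g, 1)).2 :=
      (continuous_snd.comp hFsymm).comp (continuous_id.prodMk continuous_const)
    simpa [F] using hinv

theorem separableSpace_topologicalClosure_closure {G : Type*} [Group G] [TopologicalSpace G]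
    [IsTopologicalGroup G] {c : Set G} (hc : c.Countable) :
    SeparableSpace (Subgroup.closure c).topologicalClosure := by
  have := hc.to_subtype
  have : Countable (Subgroup.closure c) := by
    rw [FreeGroup.closure_eq_range]
    exact (MonoidHom.rangeRestrict_surjective _).countable
  have hd : DenseRange (inclusion (Subgroup.closure c).le_topologicalClosure) :=
    (denseRange_inclusion_iff _).2 Subset.rfl
  exact ⟨_, countable_range _, hd⟩

theorem totallyBounded_range_of_forall_countable_image {α E : Type*} [PseudoMetricSpace E]
    {φ : α → E} (h : ∀ c : Set α, c.Countable → TotallyBounded (φ '' c)) :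
    TotallyBounded (range φ) := by
  by_contra hφ
  simp only [Metric.totallyBounded_iff, not_forall, not_exists, not_and] at hφ
  obtain ⟨ε, hε, hφ⟩ := hφ
  have hsymm : Std.Symm fun a b => ε ≤ dist (φ a) (φ b) := ⟨fun a b hab => by rwa [dist_comm]⟩
  obtain ⟨u, -, hsep⟩ := exists_seq_of_forall_finset_exists' (fun _ => True)
    (fun a b => ε ≤ dist (φ a) (φ b)) fun t _ => by
      obtain ⟨_, ⟨b, rfl⟩, hb⟩ := not_subset.1 (hφ (φ '' t) (t.finite_toSet.image φ))
      exact ⟨b, trivial, fun a ha => not_lt.1 fun hab =>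
        hb (mem_biUnion (mem_image_of_mem φ ha) (by rwa [Metric.mem_ball, dist_comm]))⟩
  obtain ⟨t, ht, hcov⟩ :=
    Metric.totallyBounded_iff.1 (h _ (countable_range u)) (ε / 2) (half_pos hε)
  have hnear (n : ℕ) : ∃ y : t, dist (φ (u n)) y < ε / 2 := by
    simpa using hcov (mem_image_of_mem φ (mem_range_self n))
  choose y hy using hnear
  have := ht.to_subtype
  obtain ⟨m, n, hmn, hymn⟩ := Finite.exists_ne_map_eq_of_infinite y
  have hyn : dist (φ (u n)) (y m) < ε / 2 := hymn ▸ hy n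
  linarith [hy m, hsep hmn, dist_triangle_right (φ (u m)) (φ (u n)) (y m)]

theorem totallyBounded_range_of_exists_dist_le {G : Type*} [Group G] [TopologicalSpace G]
    [IsTopologicalGroup G] [CompactSpace G] {E : Type*} [PseudoMetricSpace E] {φ : G → E}
    (hφ : ∀ g a b, dist (φ (g * a)) (φ (g * b)) ≤ dist (φ a) (φ b))
    (hosc : ∀ ε > 0, ∃ V : Set G, IsOpen V ∧ V.Nonempty ∧ ∀ a ∈ V, ∀ b ∈ V,
      dist (φ a) (φ b) ≤ ε) : TotallyBounded (range φ) := by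
  refine Metric.totallyBounded_iff.2 fun ε hε => ?_
  obtain ⟨V, hVo, ⟨v, hv⟩, hV⟩ := hosc (ε / 2) (half_pos hε)
  obtain ⟨t, ht⟩ := compact_covered_by_mul_left_translates (isCompact_univ (X := G))
    (hVo.interior_eq.symm ▸ ⟨v, hv⟩ : (interior V).Nonempty)
  refine ⟨(fun g => φ (g⁻¹ * v)) '' t, t.finite_toSet.image _, ?_⟩
  rintro _ ⟨a, rfl⟩
  obtain ⟨g, hg, hga⟩ := mem_iUnion₂.1 (ht (mem_univ a))
  refine mem_biUnion (mem_image_of_mem _ hg) (Metric.mem_ball.2 ?_)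
  calc dist (φ a) (φ (g⁻¹ * v)) = dist (φ (g⁻¹ * (g * a))) (φ (g⁻¹ * v)) := by
        rw [inv_mul_cancel_left]
    _ ≤ dist (φ (g * a)) (φ v) := hφ _ _ _
    _ ≤ ε / 2 := hV _ hga v hv
    _ < ε := half_lt_self hε

theorem MEmbeddedSpace.totallyBounded_range {X : Type*} [NormedAddCommGroup X] [NormedSpace ℝ X]
    (hM : MEmbeddedSpace X) {G : Type*} [Group G]
    [TopologicalSpace G] [IsTopologicalGroup G] [CompactSpace G] {φ : G → WeakDual ℝ X}
    (hφ : Continuous φ)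
    (hdist : ∀ g a b, dist (WeakDual.toStrongDual (φ (g * a))) (WeakDual.toStrongDual (φ (g * b))) ≤
      dist (WeakDual.toStrongDual (φ a)) (WeakDual.toStrongDual (φ b))) :
    TotallyBounded (range fun g => WeakDual.toStrongDual (φ g)) := by
  refine totallyBounded_range_of_forall_countable_image fun c hc => ?_
  let H : Subgroup G := (Subgroup.closure c).topologicalClosure
  have : SeparableSpace H := separableSpace_topologicalClosure_closure hc
  have : CompactSpace H := isCompact_iff_compactSpace.1
    (Subgroup.isClosed_topologicalClosure _).isCompact
  have htb := totallyBounded_range_of_exists_dist_le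
    (φ := fun h : H => WeakDual.toStrongDual (φ h)) (fun g a b => hdist g a b)
    fun ε hε => hM.exists_isOpen_forall_dist_le (hφ.comp continuous_subtype_val) hε
  refine htb.subset ?_
  rintro _ ⟨g, hg, rfl⟩
  exact ⟨⟨g, Subgroup.le_topologicalClosure _ (Subgroup.subset_closure hg)⟩, rfl⟩

end CompactGroup

section CompactSemigroup

theorem HasLIM.nonempty {S : Type*} [Semigroup S] [TopologicalSpace S] {Y : Set (S →ᵇ ℂ)}
    (h : HasLIM S Y) : Nonempty S := by
  obtain ⟨μ, -, hμ, -⟩ := h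
  by_contra hS
  have := not_nonempty_iff.1 hS
  rw [show (1 : S →ᵇ ℂ) = 0 from BoundedContinuousFunction.ext isEmptyElim, map_zero] at hμ
  exact zero_ne_one hμ

theorem isLTranslates_compContinuous {S T : Type*} [Semigroup S] [TopologicalSpace S] [Semigroup T]
    [TopologicalSpace T] [CompactSpace T] [ContinuousMul T] {j : C(S, T)}
    (hj : ∀ s t, j (s * t) = j s * j t) (f : C(T, ℂ)) :
    IsLTranslates S ((mkOfCompact f).compContinuous j) fun s =>
      (mkOfCompact (f.comp (.mulLeft (j s)))).compContinuous j := fun s t => by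
  simp [hj]

theorem compContinuous_mem_APset {S T : Type*} [Semigroup S] [TopologicalSpace S] [Semigroup T]
    [TopologicalSpace T] [CompactSpace T] [ContinuousMul T] {j : C(S, T)}
    (hj : ∀ s t, j (s * t) = j s * j t) (f : C(T, ℂ)) :
    (mkOfCompact f).compContinuous j ∈ APset S := by
  have hcont : Continuous fun p : T => (mkOfCompact (f.comp (.mulLeft p))).compContinuous j :=
    (continuous_compContinuous j).comp <|
      (ContinuousMap.isometryEquivBoundedOfCompact T ℂ).continuous.comp <|
        ContinuousMap.continuous_of_continuous_uncurry _ (f.continuous.comp continuous_mul)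
  refine ⟨_, isLTranslates_compContinuous hj f, (isCompact_range hcont).closure_of_subset ?_⟩
  exact range_comp_subset_range j fun p => (mkOfCompact (f.comp (.mulLeft p))).compContinuous j

theorem HasLIM.exists_mul_eq_mul {S T : Type*} [Semigroup S] [TopologicalSpace S]
    (h : HasLIM S (APset S)) [Semigroup T] [TopologicalSpace T] [CompactSpace T] [T2Space T]
    [ContinuousMul T] {j : C(S, T)} (hj : ∀ s t, j (s * t) = j s * j t) (hd : DenseRange j)
    (p q : T) : ∃ a b, p * a = q * b := by
  have hclosed : IsClosed {z : T × T | ∃ w : T × T, z.1 * w.1 = z.2 * w.2} := by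
    have : IsClosed {y : (T × T) × (T × T) | y.1.1 * y.2.1 = y.1.2 * y.2.2} :=
      isClosed_eq (by fun_prop) (by fun_prop)
    convert isClosedMap_fst_of_compactSpace _ this using 1
    ext z
    simp
  suffices hjj : ∀ s t, ∃ w : T × T, j s * w.1 = j t * w.2 by
    obtain ⟨w, hw⟩ : ∃ w : T × T, p * w.1 = q * w.2 :=
      (hd.prodMap hd).induction_on (p := fun z => ∃ w : T × T, z.1 * w.1 = z.2 * w.2) (p, q)
        hclosed fun z => hjj z.1 z.2
    exact ⟨w.1, w.2, hw⟩
  intro s t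
  -- Otherwise some function is `0` on `j s * T` and `1` on `j t * T`, so it has translates `0`
  -- and `1`, which have different means.
  by_contra! hst
  obtain ⟨f, hf0, hf1, -⟩ := exists_continuous_zero_one_of_isClosed
    (isCompact_range (continuous_const_mul (j s))).isClosed
    (isCompact_range (continuous_const_mul (j t))).isClosed
    (disjoint_range_iff.2 fun a b => hst (a, b))
  obtain ⟨μ, -, hμ1, hμ⟩ := h
  let f' : C(T, ℂ) := .comp ⟨Complex.ofReal, Complex.continuous_ofReal⟩ f
  have hμf := hμ _ (compContinuous_mem_APset hj f') _ (isLTranslates_compContinuous hj f')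
  have hs : (mkOfCompact (f'.comp (.mulLeft (j s)))).compContinuous j = 0 := by
    ext a
    simp [f', hf0 (mem_range_self (j a))]
  have ht : (mkOfCompact (f'.comp (.mulLeft (j t)))).compContinuous j = 1 := by
    ext a
    simp [f', hf1 (mem_range_self (j a))]
  have h01 := (hμf s).trans (hμf t).symm
  rw [hs, ht, map_zero, hμ1] at h01
  exact zero_ne_one h01

theorem nonempty_iInter_range_mul {T : Type*} [Semigroup T] [TopologicalSpace T] [CompactSpace T]
    [T2Space T] [SeparatelyContinuousMul T] [Nonempty T] (h : ∀ p q : T, ∃ a b, p * a = q * b) :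
    (⋂ p : T, range (p * ·)).Nonempty := by
  have hcompact (p : T) : IsCompact (range (p * ·)) := isCompact_range (continuous_const_mul p)
  refine IsCompact.nonempty_iInter_of_directed_nonempty_isCompact_isClosed _ (fun p q => ?_)
    (fun p => range_nonempty _) hcompact fun p => (hcompact p).isClosed
  obtain ⟨a, b, hab⟩ := h p q
  refine ⟨p * a, range_subset_iff.2 fun t => ⟨a * t, (mul_assoc _ _ _).symm⟩,
    range_subset_iff.2 fun t => ⟨b * t, ?_⟩⟩
  simp only [hab, mul_assoc]

theorem mul_mem_iInter_range_mul {T : Type*} [Semigroup T] {r : T}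
    (hr : r ∈ ⋂ p : T, range (p * ·)) (t : T) : r * t ∈ ⋂ p : T, range (p * ·) :=
  mem_iInter.2 fun p => by
    obtain ⟨q, rfl⟩ := mem_iInter.1 hr p
    exact ⟨q * t, (mul_assoc _ _ _).symm⟩

theorem mul_mem_iInter_range_mul_left {T : Type*} [Semigroup T] {r : T}
    (hr : r ∈ ⋂ p : T, range (p * ·)) (t : T) : t * r ∈ ⋂ p : T, range (p * ·) := by
  obtain ⟨a, ha : t * r * a = r⟩ := mem_iInter.1 hr (t * r)
  obtain ⟨b, hb : r * a * b = r⟩ := mem_iInter.1 hr (r * a)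
  have hab : t * r = r * b := by
    calc t * r = t * (r * a * b) := by rw [hb]
      _ = t * r * a * b := by simp only [mul_assoc]
      _ = r * b := by rw [ha]
  exact hab ▸ mul_mem_iInter_range_mul hr b

theorem exists_compact_group_leftIdeal {T : Type u} [Semigroup T] [TopologicalSpace T]
    [CompactSpace T] [T2Space T] [ContinuousMul T] [Nonempty T]
    (h : ∀ p q : T, ∃ a b, p * a = q * b) :
    ∃ (G : Type u) (_ : Group G) (_ : TopologicalSpace G) (_ : IsTopologicalGroup G)
      (_ : CompactSpace G) (i : G →ₙ* T), Continuous i ∧ ∀ t g, t * i g ∈ range i := by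
  set R : Set T := ⋂ p : T, range (p * ·)
  have hRcl : IsClosed R := isClosed_iInter fun p =>
    (isCompact_range (continuous_const_mul p)).isClosed
  obtain ⟨e, heR, hee⟩ := exists_idempotent_in_compact_subsemigroup continuous_mul_const R
    (nonempty_iInter_range_mul h) hRcl.isCompact fun x hx y _ => mul_mem_iInter_range_mul hx y
  let G : Subsemigroup T :=
    { carrier := R ∩ {g | g * e = g}
      mul_mem' := fun {a b} ha hb => ⟨mul_mem_iInter_range_mul ha.1 b,
        (mul_assoc a b e).trans (congrArg (a * ·) hb.2)⟩ }
  have hinv (g : G) : ∃ k : G, (g : T) * k = e := by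
    obtain ⟨t, ht⟩ := mem_iInter.1 heR (g : T)
    refine ⟨⟨e * t * e, mul_mem_iInter_range_mul (mul_mem_iInter_range_mul heR t) e, ?_⟩, ?_⟩
    · exact (mul_assoc _ _ _).trans (congrArg _ hee)
    · rw [← mul_assoc, ← mul_assoc, g.2.2]
      exact (congrArg (· * e) ht).trans hee
  choose inv hmul_inv using hinv
  let _ : One G := ⟨⟨e, heR, hee⟩⟩
  let _ : Inv G := ⟨inv⟩
  let _ : Group G := Group.ofRightAxioms mul_assoc (fun a => Subtype.ext a.2.2)
    fun a => Subtype.ext (hmul_inv a)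
  have : ContinuousMul G := ⟨Continuous.subtype_mk (by fun_prop) _⟩
  have : CompactSpace G := isCompact_iff_compactSpace.1
    (hRcl.inter (isClosed_eq (continuous_mul_const e) continuous_id)).isCompact
  refine ⟨G, inferInstance, inferInstance, isTopologicalGroup_of_compactSpace G, inferInstance,
    ⟨Subtype.val, fun _ _ => rfl⟩, continuous_subtype_val, fun t g => ?_⟩
  exact ⟨⟨t * g, mul_mem_iInter_range_mul_left g.2.1 t,
    (mul_assoc _ _ _).trans (congrArg (t * ·) g.2.2)⟩, rfl⟩

theorem exists_minimal_of_forall_isClosed {Q : Type*} [TopologicalSpace Q] [CompactSpace Q]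
    {P : Set Q → Prop} (hcl : ∀ A, P A → IsClosed A)
    (hP : ∀ c : Set (Set Q), c.Nonempty → (∀ A ∈ c, P A) → P (⋂₀ c)) {C : Set Q} (hC : P C)
    (hCne : C.Nonempty) : ∃ A ⊆ C, Minimal (fun A => A.Nonempty ∧ P A) A := by
  refine zorn_superset_nonempty {A | A.Nonempty ∧ P A} (fun c hc hchain hcne => ?_) C ⟨hCne, hC⟩
  have := hcne.to_subtype
  refine ⟨⋂₀ c, ⟨?_, hP c hcne fun A hA => (hc hA).2⟩, fun A hA => sInter_subset_of_mem hA⟩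
  exact IsCompact.nonempty_sInter_of_directed_nonempty_isCompact_isClosed
    (fun A hA B hB => (hchain.total hA hB).elim (fun h => ⟨A, hA, Subset.rfl, h⟩)
      fun h => ⟨B, hB, h, Subset.rfl⟩)
    (fun A hA => (hc hA).1) (fun A hA => (hcl A (hc hA).2).isCompact) fun A hA => hcl A (hc hA).2

theorem exists_forall_exists_mul_mul_eq {M : Type*} [Semigroup M] [TopologicalSpace M]
    [CompactSpace M] [T2Space M] [Nonempty M] (hM : ∀ r : M, Continuous (· * r)) :
    ∃ r : M, ∀ f, ∃ g, g * (f * r) = r := by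
  obtain ⟨L, -, hL⟩ := exists_minimal_of_forall_isClosed
    (P := fun L : Set M => IsClosed L ∧ ∀ f, ∀ g ∈ L, f * g ∈ L) (fun L hL => hL.1)
    (fun c _ hc => ⟨isClosed_sInter fun A hA => (hc A hA).1,
      fun f g hg A hA => (hc A hA).2 f g (hg A hA)⟩)
    ⟨isClosed_univ, fun _ _ _ => mem_univ _⟩ univ_nonempty
  obtain ⟨⟨r, hr⟩, -, hmul⟩ := hL.prop
  refine ⟨r, fun f => hL.le_of_le (y := range (· * (f * r))) ⟨range_nonempty _,
    (isCompact_range (hM _)).isClosed, ?_⟩ (range_subset_iff.2 fun g => hmul _ _ (hmul _ _ hr)) hr⟩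
  rintro k _ ⟨g, rfl⟩
  exact ⟨k * g, mul_assoc _ _ _⟩

end CompactSemigroup

section EnvelopingSemigroup

/-- Self-maps carry the topology of pointwise convergence, so that they form a compact right
topological monoid when the underlying space is compact. -/
instance instTopologicalSpaceEnd {Q : Type*} [TopologicalSpace Q] :
    TopologicalSpace (Function.End Q) := Pi.topologicalSpace

instance instCompactSpaceEnd {Q : Type*} [TopologicalSpace Q] [CompactSpace Q] :
    CompactSpace (Function.End Q) := Function.compactSpace

instance instT2SpaceEnd {Q : Type*} [TopologicalSpace Q] [T2Space Q] :
    T2Space (Function.End Q) := Pi.t2Space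

theorem continuous_end_apply {Q : Type*} [TopologicalSpace Q] (q : Q) :
    Continuous fun f : Function.End Q => f q :=
  continuous_apply (A := fun _ : Q => Q) q

theorem continuous_end_mul_const {Q : Type*} [TopologicalSpace Q] (g : Function.End Q) :
    Continuous fun f : Function.End Q => f * g :=
  continuous_pi fun q => continuous_end_apply (g q)

theorem continuous_end_const_mul {Q : Type*} [TopologicalSpace Q] {f : Function.End Q}
    (hf : Continuous (f : Q → Q)) : Continuous fun g : Function.End Q => f * g :=
  continuous_pi fun q => hf.comp (continuous_end_apply q)

theorem continuous_eval_of_equicontinuous {Y Q : Type*} [TopologicalSpace Y] [UniformSpace Q]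
    {A : Set (Y → Q)} (hA : A.Equicontinuous) : Continuous fun z : A × Y => z.1.1 z.2 := by
  refine continuous_iff_continuousAt.2 fun ⟨p, y⟩ => Uniform.tendsto_nhds_right.2 fun V hV => ?_
  obtain ⟨W, hW, hWV⟩ := comp_mem_uniformity_sets hV
  have hpW : ∀ᶠ p' : A in 𝓝 p, (p.1 y, p'.1 y) ∈ W :=
    Uniform.tendsto_nhds_right.1 (((continuous_apply y).comp continuous_subtype_val).tendsto p) hW
  exact (hpW.prod_nhds (hA y W hW)).mono fun z h => hWV ⟨_, h.1, h.2 z.1⟩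

/-- The Ellis (enveloping) semigroup of an action by continuous self-maps: the closure of the
translations for pointwise convergence. -/
def envelopingSemigroup {S Q : Type*} [Semigroup S] [TopologicalSpace Q] (F : S →ₙ* Function.End Q)
    (hF : ∀ s, Continuous (F s : Q → Q)) : Subsemigroup (Function.End Q) where
  carrier := closure (range F)
  mul_mem' {f g} hf hg := by
    have hleft (s : S) : F s * g ∈ closure (range F) :=
      map_mem_closure (continuous_end_const_mul (hF s)) hg <| by
        rintro _ ⟨t, rfl⟩
        exact ⟨s * t, map_mul F s t⟩
    rw [← closure_closure]
    exact map_mem_closure (f := (· * g)) (continuous_end_mul_const g) hf (forall_mem_range.2 hleft)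

theorem continuousMul_envelopingSemigroup {S Q : Type*} [Semigroup S] [UniformSpace Q]
    {F : S →ₙ* Function.End Q} (hF : Equicontinuous fun s (q : Q) => F s q) :
    ContinuousMul (envelopingSemigroup F hF.continuous) := by
  have hev := continuous_eval_of_equicontinuous (equicontinuous_iff_range.1 hF).closure
  exact ⟨Continuous.subtype_mk (continuous_pi fun q => hev.comp (continuous_fst.prodMk
    ((continuous_end_apply q).comp (continuous_subtype_val.comp continuous_snd)))) _⟩

theorem HasLIM.exists_mul_eq_mul_envelopingSemigroup {S Q : Type*} [Semigroup S]
    [TopologicalSpace S] (h : HasLIM S (APset S)) [UniformSpace Q] [CompactSpace Q] [T2Space Q]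
    {F : S →ₙ* Function.End Q} (hF : Equicontinuous fun s (q : Q) => F s q)
    (hcont : ∀ q, Continuous fun s => F s q) (p q : envelopingSemigroup F hF.continuous) :
    ∃ a b, p * a = q * b := by
  have := continuousMul_envelopingSemigroup hF
  have : CompactSpace (envelopingSemigroup F hF.continuous) :=
    isCompact_iff_compactSpace.1 isClosed_closure.isCompact
  let j : C(S, envelopingSemigroup F hF.continuous) :=
    ⟨fun s => ⟨F s, subset_closure (mem_range_self s)⟩,
      Continuous.subtype_mk (continuous_pi hcont) _⟩
  refine h.exists_mul_eq_mul (j := j) (fun s t => Subtype.ext (map_mul F s t)) (fun f => ?_) p q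
  rw [IsInducing.subtypeVal.closure_eq_preimage_closure_image, ← range_comp]
  exact f.2

end EnvelopingSemigroup

section Nonexpansive

variable {Q E : Type*} [SeminormedAddCommGroup E] {ι : Q → E}

/-- Nonexpansiveness of a self-map for the distance pulled back along `ι`. It is not a
`LipschitzWith` statement because `Q` carries a topology unrelated to that distance: in the
application `Q` is weak* compact and `ι` is its inclusion in the normed dual. -/
def NonexpansiveAlong (ι : Q → E) (f : Q → Q) : Prop :=
  ∀ q q', dist (ι (f q)) (ι (f q')) ≤ dist (ι q) (ι q')

theorem isClosed_dist_le [TopologicalSpace Q]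
    (hι : LowerSemicontinuous fun z : Q × Q => dist (ι z.1) (ι z.2)) {Y : Type*}
    [TopologicalSpace Y] {f g : Y → Q} (hf : Continuous f) (hg : Continuous g) (c : ℝ) :
    IsClosed {y | dist (ι (f y)) (ι (g y)) ≤ c} :=
  (hι.comp (hf.prodMk hg)).isClosed_preimage c

theorem isClosed_nonexpansiveAlong [TopologicalSpace Q]
    (hι : LowerSemicontinuous fun z : Q × Q => dist (ι z.1) (ι z.2)) :
    IsClosed {f : Function.End Q | NonexpansiveAlong ι f} := by
  simp only [NonexpansiveAlong, ofPred_forall]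
  exact isClosed_iInter fun q => isClosed_iInter fun q' =>
    isClosed_dist_le hι (continuous_end_apply q) (continuous_end_apply q') _

end Nonexpansive

section Orbits

variable {X Q : Type*} [NormedAddCommGroup X] [NormedSpace ℝ X]

theorem MEmbeddedSpace.exists_invariant_totallyBounded_image (hM : MEmbeddedSpace X)
    [TopologicalSpace Q] {T : Type*} [Semigroup T] [TopologicalSpace T] [CompactSpace T] [T2Space T]
    [ContinuousMul T] [Nonempty T] (hT : ∀ p q : T, ∃ a b, p * a = q * b) {ι : Q → WeakDual ℝ X}
    (hι : Continuous ι) {F : T →ₙ* Function.End Q} (hcont : ∀ q, Continuous fun t => F t q)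
    (hne : ∀ t, NonexpansiveAlong (WeakDual.toStrongDual ∘ ι) (F t)) (q : Q) :
    ∃ M ⊆ range fun t => F t q, M.Nonempty ∧ (∀ t, F t '' M = M) ∧
      TotallyBounded (WeakDual.toStrongDual ∘ ι '' M) := by
  obtain ⟨G, _, _, _, _, i, hi, hideal⟩ := exists_compact_group_leftIdeal hT
  let φ (g : G) : Q := F (i g) q
  refine ⟨range φ, range_comp_subset_range i fun t => F t q, range_nonempty φ, fun t => ?_, ?_⟩
  · obtain ⟨h, hh⟩ := hideal t 1
    have htrans (g : G) : F t (φ g) = φ (h * g) := by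
      have hg : t * i g = i (h * g) := by
        rw [map_mul, hh, mul_assoc, ← map_mul, one_mul]
      exact congrFun ((map_mul F t (i g)).symm.trans (congrArg F hg)) q
    calc F t '' range φ = range (F t ∘ φ) := (range_comp _ _).symm
      _ = range (φ ∘ Equiv.mulLeft h) := congrArg range (funext htrans)
      _ = range φ := (Equiv.mulLeft h).surjective.range_comp φ
  · have hφmul (g a : G) : φ (g * a) = F (i g) (φ a) :=
      congrFun ((congrArg F (map_mul i g a)).trans (map_mul F (i g) (i a))) q
    rw [← range_comp]
    refine hM.totallyBounded_range (φ := ι ∘ φ) (hι.comp ((hcont q).comp hi)) fun g a b => ?_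
    simp only [Function.comp_apply, hφmul]
    exact hne (i g) (φ a) (φ b)

theorem MEmbeddedSpace.exists_totallyBounded_image_of_hasLIM (hM : MEmbeddedSpace X)
    {S : Type*} [Semigroup S] [TopologicalSpace S] (hLIM : HasLIM S (APset S)) [UniformSpace Q]
    [CompactSpace Q] [T2Space Q] {ι : Q → WeakDual ℝ X} (hι : Continuous ι)
    {F : S →ₙ* Function.End Q} (hF : Equicontinuous fun s (q : Q) => F s q)
    (hcont : ∀ q, Continuous fun s => F s q)
    (hne : ∀ s, NonexpansiveAlong (WeakDual.toStrongDual ∘ ι) (F s)) (q : Q) :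
    ∃ M ⊆ closure (range fun s => F s q), M.Nonempty ∧ (∀ s, F s '' M = M) ∧
      TotallyBounded (WeakDual.toStrongDual ∘ ι '' M) := by
  let T := envelopingSemigroup F hF.continuous
  have hFT (s : S) : F s ∈ T := subset_closure (mem_range_self s)
  have := hLIM.nonempty
  have : Nonempty T := this.map fun s => ⟨F s, hFT s⟩
  have : ContinuousMul T := continuousMul_envelopingSemigroup hF
  have : CompactSpace T := isCompact_iff_compactSpace.1 isClosed_closure.isCompact
  have hlsc := (lowerSemicontinuous_dist_toStrongDual X).comp (hι.prodMap hι)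
  obtain ⟨M, hMq, hMne, hMT, hMtb⟩ := hM.exists_invariant_totallyBounded_image
    (hLIM.exists_mul_eq_mul_envelopingSemigroup hF hcont) hι (F := MulMemClass.subtype T)
    (fun q => (continuous_end_apply q).comp (continuous_subtype_val (p := (· ∈ T))))
    (fun t => closure_minimal (range_subset_iff.2 hne) (isClosed_nonexpansiveAlong hlsc) t.2) q
  refine ⟨M, hMq.trans (range_subset_iff.2 fun t => ?_), hMne, fun s => hMT ⟨F s, hFT s⟩, hMtb⟩
  exact map_mem_closure (f := fun f : Function.End Q => f q) (continuous_end_apply q) t.2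
    (forall_mem_range.2 fun s => ⟨s, rfl⟩)

end Orbits

section FixedPoints

theorem exists_mem_convexHull_subset_closedBall {E : Type*} [SeminormedAddCommGroup E]
    [NormedSpace ℝ E] {M : Set E} (hM : TotallyBounded M) (hd : 0 < Metric.diam M) :
    ∃ u ∈ convexHull ℝ M, ∃ r < Metric.diam M, M ⊆ Metric.closedBall u r := by
  -- The barycentre of a finite `d / 2`-net works: a point of `M` is within `d / 2` of one point of
  -- the net and within `d` of the others.
  classical
  set d := Metric.diam M
  obtain ⟨t, htM, htf, hcov⟩ := Metric.finite_approx_of_totallyBounded hM (d / 2) (half_pos hd)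
  lift t to Finset E using htf
  have hne : t.Nonempty := by
    obtain ⟨m, hm⟩ : M.Nonempty := nonempty_iff_ne_empty.2 fun h => hd.ne' (by simp [d, h])
    obtain ⟨y, hy, -⟩ := mem_iUnion₂.1 (hcov hm)
    exact ⟨y, hy⟩
  have hn : 0 < (t.card : ℝ) := Nat.cast_pos.2 hne.card_pos
  have hw : ∑ _y ∈ t, (t.card : ℝ)⁻¹ = 1 := by
    rw [Finset.sum_const, nsmul_eq_mul, mul_inv_cancel₀ hn.ne']
  have hw0 : ∀ y ∈ t, 0 ≤ (t.card : ℝ)⁻¹ := fun _ _ => (inv_pos.2 hn).le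
  refine ⟨∑ y ∈ t, (t.card : ℝ)⁻¹ • y, (convex_convexHull ℝ M).sum_mem hw0 hw fun y hy =>
    subset_convexHull ℝ M (htM hy), (t.card : ℝ)⁻¹ * (d / 2 + (t.card - 1) * d), ?_, fun m hm => ?_⟩
  · rw [inv_mul_lt_iff₀ hn]
    linarith
  · obtain ⟨y₀, hy₀, hmy⟩ := mem_iUnion₂.1 (hcov hm)
    rw [Metric.mem_closedBall']
    calc dist (∑ y ∈ t, (t.card : ℝ)⁻¹ • y) m
        ≤ ∑ y ∈ t, (t.card : ℝ)⁻¹ * dist y m :=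
          (convexOn_dist m convex_univ).map_sum_le hw0 hw fun _ _ => mem_univ _
      _ = (t.card : ℝ)⁻¹ * (dist y₀ m + ∑ y ∈ t.erase y₀, dist y m) := by
          rw [← Finset.mul_sum, Finset.add_sum_erase t (dist · m) hy₀]
      _ ≤ (t.card : ℝ)⁻¹ * (d / 2 + ∑ _y ∈ t.erase y₀, d) := by
          gcongr with y hy
          · exact (Metric.mem_ball'.1 hmy).le
          · exact Metric.dist_le_diam_of_mem hM.isBounded (htM (Finset.mem_of_mem_erase hy)) hm
      _ = (t.card : ℝ)⁻¹ * (d / 2 + (t.card - 1) * d) := by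
          rw [Finset.sum_const, nsmul_eq_mul, Finset.card_erase_of_mem hy₀,
            Nat.cast_pred hne.card_pos]

variable {S Q E : Type*} [NormedAddCommGroup E] [NormedSpace ℝ E] [TopologicalSpace Q]
  {ι : Q → E} {F : S → Q → Q}

/-- The closed sets invariant under the maps `F s` whose image under `ι` is convex. Closedness
refers to the topology of `Q`, convexity to the linear structure seen through `ι`. -/
structure ClosedConvexInvariant (ι : Q → E) (F : S → Q → Q) (C : Set Q) : Prop where
  isClosed : IsClosed C
  convex : Convex ℝ (ι '' C)
  mapsTo : ∀ s, MapsTo (F s) C C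

theorem ClosedConvexInvariant.sInter (hι : Function.Injective ι) {c : Set (Set Q)}
    (hne : c.Nonempty) (hc : ∀ A ∈ c, ClosedConvexInvariant ι F A) :
    ClosedConvexInvariant ι F (⋂₀ c) where
  isClosed := isClosed_sInter fun A hA => (hc A hA).isClosed
  convex := by
    rw [sInter_eq_biInter, hι.injOn.image_biInter_eq hne]
    exact convex_iInter₂ fun A hA => (hc A hA).convex
  mapsTo s q hq A hA := (hc A hA).mapsTo s (hq A hA)

theorem ClosedConvexInvariant.closure_orbit_subset {C : Set Q} (hC : ClosedConvexInvariant ι F C)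
    {q : Q} (hq : q ∈ C) : closure (range fun s => F s q) ⊆ C :=
  closure_minimal (range_subset_iff.2 fun s => hC.mapsTo s hq) hC.isClosed

theorem ClosedConvexInvariant.inter_preimage_closedBall
    (hlsc : LowerSemicontinuous fun z : Q × Q => dist (ι z.1) (ι z.2))
    (hne : ∀ s, NonexpansiveAlong ι (F s)) {C : Set Q} (hC : ClosedConvexInvariant ι F C)
    {M : Set Q} (hM : ∀ s, SurjOn (F s) M M) (r : ℝ) :
    ClosedConvexInvariant ι F (C ∩ ι ⁻¹' ⋂ m ∈ M, Metric.closedBall (ι m) r) where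
  isClosed := by
    simp only [preimage_iInter]
    exact hC.isClosed.inter <| isClosed_biInter fun m _ =>
      isClosed_dist_le hlsc continuous_id continuous_const r
  convex := by
    rw [image_inter_preimage]
    exact hC.convex.inter (convex_iInter₂ fun m _ => convex_closedBall _ _)
  mapsTo s q hq := by
    refine ⟨hC.mapsTo s hq.1, mem_iInter₂.2 fun m hm => ?_⟩
    obtain ⟨m', hm', rfl⟩ := hM s hm
    exact (hne s q m').trans (mem_iInter₂.1 hq.2 m' hm')

theorem subsingleton_image_of_minimal
    (hlsc : LowerSemicontinuous fun z : Q × Q => dist (ι z.1) (ι z.2))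
    (hne : ∀ s, NonexpansiveAlong ι (F s)) {A M : Set Q}
    (hA : Minimal (fun C => C.Nonempty ∧ ClosedConvexInvariant ι F C) A) (hMA : M ⊆ A)
    (hM : ∀ s, SurjOn (F s) M M) (htb : TotallyBounded (ι '' M)) : (ι '' M).Subsingleton := by
  by_contra hnontriv
  rw [not_subsingleton_iff] at hnontriv
  obtain ⟨u, hu, r, hr, hMu⟩ :=
    exists_mem_convexHull_subset_closedBall htb (Metric.diam_pos hnontriv htb.isBounded)
  obtain ⟨q, hqA, rfl⟩ := convexHull_min (image_mono hMA) hA.prop.2.convex hu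
  have hcenter : q ∈ A ∩ ι ⁻¹' ⋂ m ∈ M, Metric.closedBall (ι m) r :=
    ⟨hqA, mem_iInter₂.2 fun m hm => Metric.mem_closedBall'.1 (hMu (mem_image_of_mem ι hm))⟩
  have hcenters : A ⊆ A ∩ ι ⁻¹' ⋂ m ∈ M, Metric.closedBall (ι m) r :=
    hA.le_of_le ⟨⟨q, hcenter⟩, hA.prop.2.inter_preimage_closedBall hlsc hne hM r⟩ inter_subset_left
  refine hr.not_ge (Metric.diam_le_of_forall_dist_le_of_nonempty hnontriv.nonempty ?_)
  rintro _ ⟨m, hm, rfl⟩ _ ⟨m', hm', rfl⟩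
  exact mem_iInter₂.1 (hcenters (hMA hm)).2 m' hm'

theorem ClosedConvexInvariant.exists_fixed [CompactSpace Q] (hι : Function.Injective ι)
    (hlsc : LowerSemicontinuous fun z : Q × Q => dist (ι z.1) (ι z.2))
    (hne : ∀ s, NonexpansiveAlong ι (F s))
    (horb : ∀ q, ∃ M ⊆ closure (range fun s => F s q), M.Nonempty ∧ (∀ s, F s '' M = M) ∧
      TotallyBounded (ι '' M))
    {C : Set Q} (hC : ClosedConvexInvariant ι F C) (hCne : C.Nonempty) :
    ∃ q ∈ C, ∀ s, F s q = q := by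
  obtain ⟨A, hAC, hA⟩ := exists_minimal_of_forall_isClosed (fun A hA => hA.isClosed)
    (fun c => ClosedConvexInvariant.sInter hι) hC hCne
  obtain ⟨a, ha⟩ := hA.prop.1
  obtain ⟨M, hMa, ⟨m, hm⟩, hM, htb⟩ := horb a
  have hMA : M ⊆ A := hMa.trans (hA.prop.2.closure_orbit_subset ha)
  have hsub : M.Subsingleton := hι.subsingleton_image_iff.1 <|
    subsingleton_image_of_minimal hlsc hne hA hMA (fun s => (hM s).ge) htb
  exact ⟨m, hAC (hMA hm), fun s => hsub ((hM s).le (mem_image_of_mem _ hm)) hm⟩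

end FixedPoints

section Retraction

variable {S Q E : Type*} [NormedAddCommGroup E] {ι : Q → E} {F : S → Q → Q}

/-- Bruck's monoid: the self-maps of `Q` that are nonexpansive along `ι` and fix every common
fixed point of the maps `F s`. -/
def nonexpansiveFixing (ι : Q → E) (F : S → Q → Q) : Submonoid (Function.End Q) where
  carrier := {f | NonexpansiveAlong ι f ∧ ∀ q, (∀ s, F s q = q) → f q = q}
  one_mem' := ⟨fun _ _ => le_rfl, fun _ _ => rfl⟩
  mul_mem' {f _} hf hg := ⟨fun q q' => (hf.1 _ _).trans (hg.1 q q'), fun q hq =>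
    (congrArg f (hg.2 q hq)).trans (hf.2 q hq)⟩

theorem isClosed_nonexpansiveFixing [TopologicalSpace Q] [T2Space Q]
    (hlsc : LowerSemicontinuous fun z : Q × Q => dist (ι z.1) (ι z.2)) :
    IsClosed (nonexpansiveFixing ι F : Set (Function.End Q)) := by
  have hfixing : IsClosed {f : Function.End Q | ∀ q, (∀ s, F s q = q) → f q = q} := by
    simp only [ofPred_forall]
    exact isClosed_iInter fun q => isClosed_iInter fun _ =>
      isClosed_eq (continuous_end_apply q) continuous_const
  exact (isClosed_nonexpansiveAlong hlsc).inter hfixing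

variable [NormedSpace ℝ E]

theorem NonexpansiveAlong.of_eq_smul_add_smul {f g k : Q → Q}
    (hf : NonexpansiveAlong ι f) (hg : NonexpansiveAlong ι g) {a b : ℝ} (ha : 0 ≤ a) (hb : 0 ≤ b)
    (hab : a + b = 1) (hk : ∀ q, ι (k q) = a • ι (f q) + b • ι (g q)) :
    NonexpansiveAlong ι k := fun q q' =>
  calc dist (ι (k q)) (ι (k q'))
      = dist (a • ι (f q) + b • ι (g q)) (a • ι (f q') + b • ι (g q')) := by rw [hk, hk]
    _ ≤ dist (a • ι (f q)) (a • ι (f q')) + dist (b • ι (g q)) (b • ι (g q')) :=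
        dist_add_add_le _ _ _ _
    _ = a * dist (ι (f q)) (ι (f q')) + b * dist (ι (g q)) (ι (g q')) := by
        rw [dist_smul₀, dist_smul₀, Real.norm_of_nonneg ha, Real.norm_of_nonneg hb]
    _ ≤ a * dist (ι q) (ι q') + b * dist (ι q) (ι q') := by
        gcongr
        exacts [hf q q', hg q q']
    _ = dist (ι q) (ι q') := by rw [← add_mul, hab, one_mul]

variable [TopologicalSpace Q] [CompactSpace Q] [T2Space Q]

theorem closedConvexInvariant_image_nonexpansiveFixing (hι : Function.Injective ι)
    (hcv : Convex ℝ (range ι))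
    (hlsc : LowerSemicontinuous fun z : Q × Q => dist (ι z.1) (ι z.2))
    (hne : ∀ s, NonexpansiveAlong ι (F s)) (q : Q) :
    ClosedConvexInvariant ι F
      ((fun f : Function.End Q => f q) '' nonexpansiveFixing ι F) where
  isClosed :=
    ((isClosed_nonexpansiveFixing hlsc).isCompact.image (continuous_end_apply q)).isClosed
  convex := by
    rintro _ ⟨_, ⟨f, hf, rfl⟩, rfl⟩ _ ⟨_, ⟨g, hg, rfl⟩, rfl⟩ a b ha hb hab
    choose k hk using fun p => hcv (mem_range_self (f p)) (mem_range_self (g p)) ha hb hab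
    refine ⟨k q, ⟨k, ⟨hf.1.of_eq_smul_add_smul hg.1 ha hb hab hk, fun p hp => hι ?_⟩, rfl⟩, hk q⟩
    rw [hk, hf.2 p hp, hg.2 p hp, ← add_smul, hab, one_smul]
  mapsTo := by
    rintro s _ ⟨f, hf, rfl⟩
    have hs : (F s : Function.End Q) ∈ nonexpansiveFixing ι F := ⟨hne s, fun q hq => hq s⟩
    exact ⟨_, mul_mem hs hf, rfl⟩

theorem exists_nonexpansive_retraction (hι : Function.Injective ι) (hcv : Convex ℝ (range ι))
    (hlsc : LowerSemicontinuous fun z : Q × Q => dist (ι z.1) (ι z.2))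
    (hne : ∀ s, NonexpansiveAlong ι (F s))
    (hfix : ∀ C, ClosedConvexInvariant ι F C → C.Nonempty → ∃ q ∈ C, ∀ s, F s q = q) :
    ∃ r : Q → Q, (∀ q s, F s (r q) = r q) ∧ (∀ q, (∀ s, F s q = q) → r q = q) ∧
      NonexpansiveAlong ι r := by
  have : CompactSpace (nonexpansiveFixing ι F) :=
    isCompact_iff_compactSpace.1 (isClosed_nonexpansiveFixing hlsc).isCompact
  obtain ⟨r, hr⟩ := exists_forall_exists_mul_mul_eq (M := nonexpansiveFixing ι F) fun f =>
    Continuous.subtype_mk ((continuous_end_mul_const (f : Function.End Q)).comp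
      continuous_subtype_val) _
  refine ⟨r.1, fun q => ?_, r.2.2, r.2.1⟩
  obtain ⟨_, ⟨f, hf, rfl⟩, hfq⟩ := hfix _
    (closedConvexInvariant_image_nonexpansiveFixing hι hcv hlsc hne (r.1 q)) ⟨_, 1, one_mem _, rfl⟩
  obtain ⟨g, hg⟩ := hr ⟨f, hf⟩
  have hrq : r.1 q = f (r.1 q) :=
    calc r.1 q = g.1 (f (r.1 q)) := congrArg (fun h => h.1 q) hg.symm
      _ = f (r.1 q) := g.2.2 _ hfq
  rw [hrq]
  exact hfq

end Retraction

theorem MEmbeddedSpace.exists_nonexpansive_retraction_of_hasLIM {X : Type*} [NormedAddCommGroup X]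
    [NormedSpace ℝ X] (hM : MEmbeddedSpace X) {S : Type*} [Semigroup S] [TopologicalSpace S]
    (hLIM : HasLIM S (APset S)) {Q : Type*} [UniformSpace Q] [CompactSpace Q] [T2Space Q]
    {ι : Q → WeakDual ℝ X} (hι : Function.Injective ι) (hιc : Continuous ι)
    (hcv : Convex ℝ (range (WeakDual.toStrongDual ∘ ι))) {F : S →ₙ* Function.End Q}
    (hF : Equicontinuous fun s (q : Q) => F s q) (hcont : ∀ q, Continuous fun s => F s q)
    (hne : ∀ s, NonexpansiveAlong (WeakDual.toStrongDual ∘ ι) (F s)) :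
    ∃ r : Q → Q, (∀ q s, F s (r q) = r q) ∧ (∀ q, (∀ s, F s q = q) → r q = q) ∧
      NonexpansiveAlong (WeakDual.toStrongDual ∘ ι) r := by
  have hinj : Function.Injective (WeakDual.toStrongDual ∘ ι) :=
    WeakDual.toStrongDual.injective.comp hι
  have hlsc := (lowerSemicontinuous_dist_toStrongDual X).comp (hιc.prodMap hιc)
  exact exists_nonexpansive_retraction hinj hcv hlsc hne fun C hC hCne =>
    hC.exists_fixed hinj hlsc hne (hM.exists_totallyBounded_image_of_hasLIM hLIM hιc hF hcont hne)
      hCne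

theorem equicontinuous_codRestrict {S A : Type*} [AddCommGroup A] [UniformSpace A]
    [IsUniformAddGroup A] {K : Set A} {π : S → A → A} (hπ : ∀ s, MapsTo (π s) K K)
    (h : ∀ x ∈ K, ∀ V ∈ 𝓝 (0 : A), ∃ U ∈ 𝓝 x, ∀ s, ∀ y ∈ U ∩ K, π s y - π s x ∈ V) :
    Equicontinuous fun s (q : K) => (⟨π s q, hπ s q.2⟩ : K) := by
  refine (isUniformInducing_val K).equicontinuous_iff.2 fun x W hW => ?_
  rw [uniformity_eq_comap_nhds_zero] at hW
  obtain ⟨V, hV, hVW⟩ := mem_comap.1 hW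
  obtain ⟨U, hU, hUV⟩ := h x x.2 V hV
  filter_upwards [continuous_subtype_val.continuousAt hU] with y hy s
  exact hVW (hUV s y ⟨hy, y.2⟩)

theorem fixedPoint_and_retract_MEmbedded_of_AP_hasLIM_general
    {S : Type*} [Semigroup S] [TopologicalSpace S] (hLIM : HasLIM S (APset S))
    {X : Type*} [NormedAddCommGroup X] [NormedSpace ℝ X] (hM : MEmbeddedSpace X)
    {K : Set (WeakDual ℝ X)} {π : S → WeakDual ℝ X → WeakDual ℝ X}
    (hKne : K.Nonempty) (hKcv : Convex ℝ K) (hKcpt : IsCompact K)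
    (hinv : ∀ s, MapsTo (π s) K K) (hact : ∀ s t, ∀ x ∈ K, π (s * t) x = π s (π t x))
    (horb : ∀ x ∈ K, Continuous fun s => π s x)
    (hne : ∀ s, ∀ x ∈ K, ∀ y ∈ K, dist (WeakDual.toStrongDual (π s x))
      (WeakDual.toStrongDual (π s y)) ≤ dist (WeakDual.toStrongDual x) (WeakDual.toStrongDual y))
    (hequi : ∀ x ∈ K, ∀ V ∈ 𝓝 (0 : WeakDual ℝ X),
      ∃ U ∈ 𝓝 x, ∀ s, ∀ y ∈ U ∩ K, π s y - π s x ∈ V) :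
    (∃ x ∈ K, ∀ s, π s x = x) ∧
    ∃ r : WeakDual ℝ X → WeakDual ℝ X,
      (∀ x ∈ K, r x ∈ K ∧ ∀ s, π s (r x) = r x) ∧
      (∀ x ∈ K, r (r x) = r x) ∧
      (∀ x ∈ K, (∀ s, π s x = x) → r x = x) ∧
      (∀ x ∈ K, ∀ y ∈ K, dist (WeakDual.toStrongDual (r x)) (WeakDual.toStrongDual (r y)) ≤
        dist (WeakDual.toStrongDual x) (WeakDual.toStrongDual y)) := by
  let _ : UniformSpace (WeakDual ℝ X) := IsTopologicalAddGroup.rightUniformSpace _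
  have : IsUniformAddGroup (WeakDual ℝ X) := isUniformAddGroup_of_addCommGroup
  have : CompactSpace K := isCompact_iff_compactSpace.1 hKcpt
  let F : S →ₙ* Function.End K :=
    { toFun := fun s q => ⟨π s q, hinv s q.2⟩
      map_mul' := fun s t => funext fun q => Subtype.ext (hact s t q q.2) }
  have hcv : Convex ℝ (range (WeakDual.toStrongDual ∘ ((↑) : K → WeakDual ℝ X))) := by
    rw [range_comp, Subtype.range_coe]
    exact hKcv.linear_image WeakDual.toStrongDual.toLinearMap
  obtain ⟨r, hrF, hfix, hr⟩ := hM.exists_nonexpansive_retraction_of_hasLIM hLIM (F := F)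
    Subtype.val_injective continuous_subtype_val hcv
    (equicontinuous_codRestrict hinv hequi) (fun q => (horb q q.2).subtype_mk _)
    fun s q q' => hne s q q.2 q' q'.2
  have hrS (q : K) (s : S) : π s (r q) = r q := congrArg Subtype.val (hrF q s)
  obtain ⟨x₀, hx₀⟩ := hKne
  let R : WeakDual ℝ X → WeakDual ℝ X := Function.extend Subtype.val (Subtype.val ∘ r) id
  have hR (q : K) : R q = r q := Subtype.val_injective.extend_apply _ _ q
  refine ⟨⟨r ⟨x₀, hx₀⟩, (r ⟨x₀, hx₀⟩).2, hrS _⟩, R, fun x hx => ?_, fun x hx => ?_,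
    fun x hx hxS => ?_, fun x hx y hy => ?_⟩
  · rw [hR ⟨x, hx⟩]
    exact ⟨(r ⟨x, hx⟩).2, hrS _⟩
  · rw [hR ⟨x, hx⟩, hR, hfix _ (hrF _)]
  · rw [hR ⟨x, hx⟩, hfix ⟨x, hx⟩ fun s => Subtype.ext (hxS s)]
  · rw [hR ⟨x, hx⟩, hR ⟨y, hy⟩]
    exact hr ⟨x, hx⟩ ⟨y, hy⟩

/-- **Theorem (M), case (i)**: a nonexpansive dynamical system `(S,(K,weak*))` on a weak*
compact convex subset of the dual of an `M`-embedded Banach space, with weak* equicontinuous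
translations, has a common fixed point provided `AP(S)` has a left invariant mean; moreover the
fixed point set is a nonexpansive retract of `K`. -/
theorem fixedPoint_and_retract_MEmbedded_of_AP_hasLIM
    {S : Type u} [Semigroup S] [TopologicalSpace S] [T2Space S]
    (hS : IsSemitopologicalSemigroup S)
    {X : Type v} [NormedAddCommGroup X] [NormedSpace ℝ X] [CompleteSpace X]
    -- `X` is an `M`-embedded Banach space
    (hM : MEmbeddedSpace X)
    (K : Set (StrongDual ℝ X)) (π : S → StrongDual ℝ X → StrongDual ℝ X)
    -- `K` is a nonempty weak* compact convex set
    (hKne : K.Nonempty) (hKcv : Convex ℝ K) (hKcpt : @IsCompact _ (wstarTop X) K)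
    -- `(S,(K,weak*))` is a dynamical system
    (hinv : ∀ s : S, MapsTo (π s) K K)
    (hact : ∀ s t : S, ∀ x ∈ K, π (s * t) x = π s (π t x))
    (horb : ∀ x ∈ K, @Continuous S _ _ (wstarTop X) fun s => π s x)
    (htra : ∀ s : S, @ContinuousOn _ _ (wstarTop X) (wstarTop X) (π s) K)
    -- the system is nonexpansive
    (hne : ∀ s : S, ∀ x ∈ K, ∀ y ∈ K, ‖π s x - π s y‖ ≤ ‖x - y‖)
    -- the translations are equicontinuous in the weak* topology
    (hequi : ∀ x ∈ K, ∀ V ∈ @nhds _ (wstarTop X) (0 : StrongDual ℝ X),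
      ∃ U ∈ @nhds _ (wstarTop X) x, ∀ s : S, ∀ y ∈ U ∩ K, π s y - π s x ∈ V)
    -- the amenability hypothesis
    (hLIM : HasLIM S (APset S)) :
    -- `S` has a fixed point in `K` ...
    (∃ x ∈ K, ∀ s : S, π s x = x) ∧
    -- ... and `F(S)` is a nonexpansive retract of `K`
    ∃ r : StrongDual ℝ X → StrongDual ℝ X,
      (∀ x ∈ K, r x ∈ K ∧ ∀ s : S, π s (r x) = r x) ∧
      (∀ x ∈ K, r (r x) = r x) ∧
      (∀ x ∈ K, (∀ s : S, π s x = x) → r x = x) ∧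
      (∀ x ∈ K, ∀ y ∈ K, ‖r x - r y‖ ≤ ‖x - y‖) := by
  simp only [← dist_eq_norm] at hne ⊢
  exact fixedPoint_and_retract_MEmbedded_of_AP_hasLIM_general hLIM hM hKne hKcv hKcpt hinv
    hact horb hne hequi
end
end
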